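/- arXiv:2009.13728 — 4 statements merged into one kernel-verified Lean document; each statement's English description precedes it below -/
import Mathlib

section
/- Let a and b be real constants such that either (1) a = 1 and 1 ≤ b ≤ 4, or (2) 1 < a ≤ b and b ≤ 3 and b ≤ 1 + a and b ≤ 4a/(5a − 4). Then the function f(z) = z F(a,b;a+b;z) is injective on 𝔻 and its image f(𝔻) is a convex subset of ℂ. -/
open Complex Filter MeasureTheory Metric Set

/-- The Gaussian hypergeometric function on the unit disc (power series). -/
noncomputable def hyperF (a b c : ℝ) (z : ℂ) : ℂ :=
  ∑' n : ℕ, (((ascPochhammer ℝ n).eval a * (ascPochhammer ℝ n).eval b /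
      ((ascPochhammer ℝ n).eval c * (n.factorial : ℝ)) : ℝ) : ℂ) * z ^ n

section helpers


lemma aux_const (x g h d E : ℝ) (hx0 : 0 ≤ x) (hx3 : x ≤ 3 / 10)
    (hh : h = x * (g + 1) / 2) (hd : d * (1 + x) = 1 - x) (hE : E * (1 + x) ^ 2 = 2 * x)
    (hghi : g * (1 + x) * (1 + 5 * x) ≤ (1 - x) * (3 + 5 * x)) :
    E * g < (1 / 2 + h * d) * d := by
  have hx1 : 0 < 1 + x := by linarith
  have h1 : x * (3 - x) * (g * (1 + x) * (1 + 5 * x)) ≤ x * (3 - x) * ((1 - x) * (3 + 5 * x)) :=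
    mul_le_mul_of_nonneg_left hghi (mul_nonneg hx0 (by linarith))
  have h2 : x * (3 - x) * ((1 - x) * (3 + 5 * x)) < (1 - x) * (1 + 2 * x - x ^ 2) * (1 + 5 * x) := by
    have : 0 < (1 - x) * ((1 - 3 * x) * (1 + x)) :=
      mul_pos (by linarith) (mul_pos (by linarith) (by linarith))
    nlinarith
  have h3 : x * (3 - x) * g * (1 + x) < (1 - x) * (1 + 2 * x - x ^ 2) := by
    have : x * (3 - x) * g * (1 + x) * (1 + 5 * x) < (1 - x) * (1 + 2 * x - x ^ 2) * (1 + 5 * x) := by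
      linarith
    exact lt_of_mul_lt_mul_right this (by linarith)
  have h4 : E * g * (2 * (1 + x) ^ 2) < (1 / 2 + h * d) * d * (2 * (1 + x) ^ 2) := by
    have e1 : E * g * (2 * (1 + x) ^ 2) = 4 * x * g := by linear_combination 2 * g * hE
    have e2 : (1 / 2 + h * d) * d * (2 * (1 + x) ^ 2) = (1 - x) * (1 + x) + x * (g + 1) * (1 - x) ^ 2 := by
      rw [hh]
      linear_combination (1 + x + x * (g + 1) * (d * (1 + x) + (1 - x))) * hd
    rw [e1, e2]; nlinarith
  exact lt_of_mul_lt_mul_right h4 (by positivity)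

lemma aux_slope (x g d E : ℝ) (hx0 : 0 ≤ x) (hx3 : x ≤ 3 / 10)
    (hd : d * (1 + x) = 1 - x) (hE : E * (1 + x) ^ 2 = 2 * x)
    (hglo : x * (3 + 4 * x) ≤ g * (1 + x)) :
    E * d ≤ g * d ^ 2 / 2 + 9 / 25 * (g / 2) := by
  have hx1 : 0 < 1 + x := by linarith
  have h1 : 4 * (1 - x) ≤ (3 + 4 * x) * ((1 - x) ^ 2 + 9 / 25 * (1 + x) ^ 2) := by
    nlinarith [mul_nonneg hx0 hx0, mul_nonneg (mul_nonneg hx0 hx0) hx0]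
  have h2 : x * (4 * (1 - x)) ≤ x * ((3 + 4 * x) * ((1 - x) ^ 2 + 9 / 25 * (1 + x) ^ 2)) :=
    mul_le_mul_of_nonneg_left h1 hx0
  have h3 : x * (3 + 4 * x) * ((1 - x) ^ 2 + 9 / 25 * (1 + x) ^ 2) ≤
      g * (1 + x) * ((1 - x) ^ 2 + 9 / 25 * (1 + x) ^ 2) :=
    mul_le_mul_of_nonneg_right hglo (by positivity)
  have h4 : E * d * (2 * (1 + x) ^ 3) ≤ (g * d ^ 2 / 2 + 9 / 25 * (g / 2)) * (2 * (1 + x) ^ 3) := by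
    have e1 : E * d * (2 * (1 + x) ^ 3) = 4 * x * (1 - x) := by
      linear_combination 2 * d * (1 + x) * hE + 4 * x * hd
    have e2 : (g * d ^ 2 / 2 + 9 / 25 * (g / 2)) * (2 * (1 + x) ^ 3) =
        g * (1 + x) * ((1 - x) ^ 2 + 9 / 25 * (1 + x) ^ 2) := by
      linear_combination g * (1 + x) * (d * (1 + x) + (1 - x)) * hd
    rw [e1, e2]; linarith
  exact le_of_mul_le_mul_right h4 (by positivity)

lemma aux_poly (x g c l u G : ℝ) (hl0 : 0 ≤ l) (hl : l ≤ x) (hu : x ≤ u) (hu3 : u ≤ 3 / 10) (hg0 : 0 < g)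
    (hghi : g * (1 + x) * (1 + 5 * x) ≤ (1 - x) * (3 + 5 * x)) (hG0 : 0 ≤ G)
    (hG : (1 - l) * (3 + 5 * l) ≤ G * ((1 + l) * (1 + 5 * l)))
    (hc : c = 2 / 5 * (1 - u) ^ 2 - 6 / 5 * u - 3 / 10 * u * (1 - u) ^ 2) (hc0 : c ≤ 0)
    (hfin : 0 ≤ c * G ^ 2 + (1 - u) ^ 2 / 2 - 1 / 20 * u * G) :
    0 ≤ g ^ 2 * (2 / 5 * (1 - x) ^ 2 - 6 / 5 * x - 3 / 10 * x * (1 - x) ^ 2)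
      - g * (x * (1 - x) ^ 2) / 20 + (1 - x) ^ 2 / 2 := by
  have hx0 : 0 ≤ x := by linarith
  have hgG : g ≤ G := by
    have h1 : (1 - x) * (3 + 5 * x) * ((1 + l) * (1 + 5 * l)) ≤ (1 - l) * (3 + 5 * l) * ((1 + x) * (1 + 5 * x)) := by
      have : 0 ≤ (x - l) * (16 + 20 * (x + l) + 40 * x * l) := by
        apply mul_nonneg (by linarith); positivity
      nlinarith
    have h2 : g * ((1 + x) * (1 + 5 * x)) * ((1 + l) * (1 + 5 * l)) ≤ G * ((1 + x) * (1 + 5 * x)) * ((1 + l) * (1 + 5 * l)) := by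
      have h3 := mul_le_mul_of_nonneg_right hghi (show 0 ≤ (1 + l) * (1 + 5 * l) by positivity)
      have h4 := mul_le_mul_of_nonneg_right hG (show 0 ≤ (1 + x) * (1 + 5 * x) by positivity)
      nlinarith
    have h5 := le_of_mul_le_mul_right h2 (by positivity)
    exact le_of_mul_le_mul_right h5 (by positivity)
  have hcx : c ≤ 2 / 5 * (1 - x) ^ 2 - 6 / 5 * x - 3 / 10 * x * (1 - x) ^ 2 := by
    have h1 : (1 - u) ^ 2 ≤ (1 - x) ^ 2 := pow_le_pow_left₀ (by linarith) (by linarith) 2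
    have h2 : x * (1 - x) ^ 2 - u * (1 - u) ^ 2 ≤ (u - x) := by
      have : 0 ≤ (u - x) * (2 - 2 * (x + u) + (x ^ 2 + x * u + u ^ 2)) :=
        mul_nonneg (by linarith) (by nlinarith)
      nlinarith
    rw [hc]; nlinarith
  have h1 : c * G ^ 2 ≤ c * g ^ 2 := mul_le_mul_of_nonpos_left (pow_le_pow_left₀ hg0.le hgG 2) hc0
  have h2 : c * g ^ 2 ≤ g ^ 2 * (2 / 5 * (1 - x) ^ 2 - 6 / 5 * x - 3 / 10 * x * (1 - x) ^ 2) := by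
    rw [mul_comm]; exact mul_le_mul_of_nonneg_left hcx (sq_nonneg g)
  have h3 : (1 - u) ^ 2 ≤ (1 - x) ^ 2 := pow_le_pow_left₀ (by linarith) (by linarith) 2
  have h4 : g * (x * (1 - x) ^ 2) ≤ G * (u * 1) := by
    apply mul_le_mul hgG _ (by positivity) hG0
    apply mul_le_mul hu _ (by positivity) (by linarith)
    nlinarith
  nlinarith

lemma aux_lam (x g h d y T S m X : ℝ) (hx0 : 0 ≤ x) (hx3 : x ≤ 3 / 10) (hg0 : 0 < g)
    (hh : h = x * (g + 1) / 2) (hd : d * (1 + x) = 1 - x) (hdh : 1 / 2 < d)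
    (hghi : g * (1 + x) * (1 + 5 * x) ≤ (1 - x) * (3 + 5 * x))
    (hTx : T * (1 - x) ^ 2 ≤ 2 * x) (hS : S = g ^ 2 + y ^ 2)
    (hm : (1 + y ^ 2) / 2 ≤ m) (hX : d < X) :
    3 / 5 * (S * (1 + T) + h * g) ≤ S + m + h * X := by
  have hh0 : 0 ≤ h := by rw [hh]; positivity
  have h1x : 0 < (1 - x) ^ 2 := by apply pow_pos; linarith
  have hT32 : T ≤ 3 / 2 := by
    have : T * (1 - x) ^ 2 ≤ 3 / 2 * (1 - x) ^ 2 := by nlinarith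
    exact le_of_mul_le_mul_right this h1x
  have hy : 0 ≤ y ^ 2 * (9 / 10 - 3 / 5 * T) := mul_nonneg (sq_nonneg y) (by linarith)
  have hhX : h * d ≤ h * X := mul_le_mul_of_nonneg_left hX.le hh0
  have hc : 0 ≤ (g ^ 2 * (2 / 5 - 3 / 5 * T) + 1 / 2 + h * (d - 3 / 5 * g)) * (1 - x) ^ 2 := by
    have e1 : g ^ 2 * (2 / 5 * (1 - x) ^ 2 - 6 / 5 * x) ≤ g ^ 2 * (2 / 5 - 3 / 5 * T) * (1 - x) ^ 2 := by
      rw [mul_assoc]; apply mul_le_mul_of_nonneg_left _ (sq_nonneg g); nlinarith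
    have e2 : x / 2 * ((-1 / 10) * g - 3 / 5 * g ^ 2) * (1 - x) ^ 2 ≤ h * (d - 3 / 5 * g) * (1 - x) ^ 2 := by
      apply mul_le_mul_of_nonneg_right _ h1x.le
      rw [hh, show x * (g + 1) / 2 * (d - 3 / 5 * g) = x / 2 * ((g + 1) * (d - 3 / 5 * g)) by ring]
      apply mul_le_mul_of_nonneg_left _ (by positivity)
      nlinarith
    have key : 0 ≤ g ^ 2 * (2 / 5 * (1 - x) ^ 2 - 6 / 5 * x - 3 / 10 * x * (1 - x) ^ 2)
      - g * (x * (1 - x) ^ 2) / 20 + (1 - x) ^ 2 / 2 := by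
      rcases le_total x (9 / 50) with h1 | h1
      · have hc2 : 0 ≤ 2 / 5 * (1 - x) ^ 2 - 6 / 5 * x - 3 / 10 * x * (1 - x) ^ 2 := by
          nlinarith [mul_nonneg hx0 hx0, mul_nonneg (mul_nonneg hx0 hx0) (sub_nonneg.2 h1), mul_nonneg hx0 (sub_nonneg.2 h1)]
        have hgx : g * x ≤ 10 := by
          by_contra hcon
          push Not at hcon
          nlinarith
        have : g * (x * (1 - x) ^ 2) ≤ 10 * (1 - x) ^ 2 := by
          rw [← mul_assoc]; exact mul_le_mul_of_nonneg_right hgx h1x.le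
        have := mul_nonneg (sq_nonneg g) hc2
        linarith
      rcases le_total x (24 / 100) with h2 | h2
      · exact aux_poly x g _ (9 / 50) (24 / 100) (143 / 100) (by norm_num) h1 h2 (by norm_num) hg0 hghi
          (by norm_num) (by norm_num) rfl (by norm_num) (by norm_num)
      rcases le_total x (27 / 100) with h3 | h3
      · exact aux_poly x g _ (24 / 100) (27 / 100) (118 / 100) (by norm_num) h2 h3 (by norm_num) hg0 hghi
          (by norm_num) (by norm_num) rfl (by norm_num) (by norm_num)
      rcases le_total x (285 / 1000) with h4 | h4
      · exact aux_poly x g _ (27 / 100) (285 / 1000) (107 / 100) (by norm_num) h3 h4 (by norm_num) hg0 hghi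
          (by norm_num) (by norm_num) rfl (by norm_num) (by norm_num)
      · exact aux_poly x g _ (285 / 1000) (3 / 10) (102 / 100) (by norm_num) h4 hx3 (by norm_num) hg0 hghi
          (by norm_num) (by norm_num) rfl (by norm_num) (by norm_num)
    nlinarith
  have hc' : 0 ≤ g ^ 2 * (2 / 5 - 3 / 5 * T) + 1 / 2 + h * (d - 3 / 5 * g) :=
    nonneg_of_mul_nonneg_left hc h1x
  rw [hS]; nlinarith

lemma real_key_tail (y Y X T m g h d E S Q : ℝ) (hh0 : 0 ≤ h) (hg0 : 0 < g) (hS0 : 0 < S)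
    (hd0 : 1 / 2 < d) (hE2 : E ≤ 1 / 2) (hX : d < X) (hT : E = T * (X ^ 2 + Y ^ 2))
    (hQ : Q = m * g + h * g * d + h * (y * Y)) (hQpos : 0 < Q)
    (hI : S * E * d < Q * (d ^ 2 + Y ^ 2))
    (hre : S * (X - d - T * X) + m * g + h * (g * X + y * Y) = 0) : False := by
  have hX0 : 0 < X := by linarith
  have hR : 0 < X ^ 2 + Y ^ 2 := by positivity
  have hSTX : S * (X - d) + Q ≤ S * T * X := by
    rw [hQ]; nlinarith [mul_nonneg (mul_nonneg hh0 hg0.le) (sub_nonneg.2 hX.le)]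
  have hmain : (S * (X - d) + Q) * (X ^ 2 + Y ^ 2) ≤ E * S * X := by
    calc _ ≤ S * T * X * (X ^ 2 + Y ^ 2) := mul_le_mul_of_nonneg_right hSTX hR.le
      _ = _ := by rw [hT]; ring
  have hXd : 0 < X - d := by linarith
  have hfin : (X - d) * (S * (X ^ 2 + Y ^ 2) * d + Q * (X * d - Y ^ 2)) < 0 := by
    have := mul_lt_mul_of_pos_right hI hX0
    have h2 := mul_le_mul_of_nonneg_right hmain (show 0 ≤ d by linarith)
    nlinarith
  have hneg : S * (X ^ 2 + Y ^ 2) * d + Q * (X * d - Y ^ 2) < 0 := by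
    by_contra hc
    push Not at hc
    nlinarith [mul_nonneg hXd.le hc]
  have hdp : 0 < d := by linarith
  have hY : X * d < Y ^ 2 := by
    by_contra hc
    push Not at hc
    have := mul_nonneg hQpos.le (sub_nonneg.2 hc)
    have h3 : 0 < S * (X ^ 2 + Y ^ 2) * d := by positivity
    linarith
  have hT1 : T ≤ 1 := by
    have hE2 : E ≤ 2 * d ^ 2 := by
      nlinarith
    by_contra hc
    push Not at hc
    nlinarith
  have hQS : Q ≤ S * d := by
    have : S * X * T ≤ S * X * 1 := mul_le_mul_of_nonneg_left hT1 (by positivity)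
    nlinarith
  have : Q * Y ^ 2 ≤ S * d * Y ^ 2 := mul_le_mul_of_nonneg_right hQS (sq_nonneg Y)
  have h8 : 0 < S * X ^ 2 * d := by positivity
  have h9 : 0 < Q * (X * d) := by positivity
  nlinarith

set_option maxHeartbeats 1000000 in
lemma real_key (x α y Y X T m g h d E S : ℝ) (hx0 : 0 ≤ x) (hα : 0 < α) (hxα : 4 * x ≤ α)
    (hα3 : α * (1 + 5 * x) ≤ 3) (hg : g = α - x / (1 + x)) (hh : h = x * (g + 1) / 2)
    (hd : d = (1 - x) / (1 + x)) (hE : E = 2 * x / (1 + x) ^ 2) (hS : S = g ^ 2 + y ^ 2)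
    (hm : (1 + y ^ 2) / 2 ≤ m) (hX : d < X)
    (hT : E = T * (X ^ 2 + Y ^ 2))
    (hre : S * (X - d - T * X) + m * g + h * (g * X + y * Y) = 0)
    (him : Y * (S * (1 + T) + h * g) = y * (S + m + h * X)) : False := by
  have hx3 : x ≤ 3 / 10 := by nlinarith
  have hx1 : 0 < 1 + x := by linarith
  have hg' : g * (1 + x) = α * (1 + x) - x := by rw [hg]; field_simp
  have hd' : d * (1 + x) = 1 - x := by rw [hd]; field_simp
  have hE' : E * (1 + x) ^ 2 = 2 * x := by rw [hE]; field_simp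
  have hg0 : 0 < g := by
    have : 0 < g * (1 + x) := by rw [hg']; nlinarith
    exact pos_of_mul_pos_left this hx1.le
  have hglo : x * (3 + 4 * x) ≤ g * (1 + x) := by rw [hg']; nlinarith
  have hghi : g * (1 + x) * (1 + 5 * x) ≤ (1 - x) * (3 + 5 * x) := by rw [hg']; nlinarith
  have hd0 : 1 / 2 < d := by
    rw [hd, lt_div_iff₀ hx1]; linarith
  have hd1 : d ≤ 1 := by
    rw [hd, div_le_iff₀ hx1]; linarith
  have hh0 : 0 ≤ h := by rw [hh]; positivity
  have hS0 : 0 < S := by rw [hS]; positivity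
  have hE0 : 0 ≤ E := by rw [hE]; positivity
  have hX0 : 0 < X := by linarith
  have hE2 : E ≤ 1 / 2 := by
    rw [hE, div_le_iff₀ (by positivity)]; nlinarith [sq_nonneg (1 - x)]
  have hR : 0 < X ^ 2 + Y ^ 2 := by positivity
  have hT0 : 0 ≤ T := by
    rw [hT] at hE0; exact nonneg_of_mul_nonneg_left hE0 hR
  have hTd : T * d ^ 2 ≤ E := by
    rw [hT]; apply mul_le_mul_of_nonneg_left _ hT0
    have := pow_le_pow_left₀ (show 0 ≤ d by linarith) hX.le 2
    linarith [sq_nonneg Y]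
  have hTx : T * (1 - x) ^ 2 ≤ 2 * x := by
    have := mul_le_mul_of_nonneg_right hTd (sq_nonneg (1 + x))
    rw [← hE', ← hd']; linarith [show T * d ^ 2 * (1 + x) ^ 2 = T * (d * (1 + x)) ^ 2 by ring]
  have hm0 : 0 < m := by nlinarith [sq_nonneg y]
  -- main constant inequality
  have hconst : E * g < (1 / 2 + h * d) * d := by
    exact aux_const x g h d E hx0 hx3 hh hd' hE' hghi
  have hslope : E * d ≤ g * d ^ 2 / 2 + 9 / 25 * (g / 2) := by
    exact aux_slope x g d E hx0 hx3 hd' hE' hglo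
  have hlam : 3 / 5 * (S * (1 + T) + h * g) ≤ S + m + h * X := by
    exact aux_lam x g h d y T S m X hx0 hx3 hg0 hh hd' hd0 hghi hTx hS hm hX
  have hP : 0 < S * (1 + T) + h * g := by positivity
  set P := S * (1 + T) + h * g with hPdef
  set Q' := S + m + h * X with hQdef
  have hyY : 0 ≤ y * Y := by
    have : (y * Y) * P = y ^ 2 * Q' := by linear_combination y * him
    have h2 : 0 ≤ (y * Y) * P := by rw [this]; positivity
    exact nonneg_of_mul_nonneg_left h2 hP
  have hYy : 9 / 25 * y ^ 2 ≤ Y ^ 2 := by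
    have h1 : Y ^ 2 * P ^ 2 = y ^ 2 * Q' ^ 2 := by
      linear_combination (Y * P + y * Q') * him
    have h2 : (3 / 5 * P) ^ 2 ≤ Q' ^ 2 := by
      apply pow_le_pow_left₀ (by positivity) hlam
    have h3 : 9 / 25 * y ^ 2 * P ^ 2 ≤ Y ^ 2 * P ^ 2 := by
      rw [h1]; linarith [mul_le_mul_of_nonneg_left h2 (sq_nonneg y)]
    exact le_of_mul_le_mul_right h3 (by positivity)
  obtain ⟨Q, hQ⟩ : ∃ Q, Q = m * g + h * g * d + h * (y * Y) := ⟨_, rfl⟩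
  have hQ0 : g * (1 + y ^ 2) / 2 + h * g * d ≤ Q := by
    rw [hQ]; linarith [mul_nonneg hh0 hyY, mul_le_mul_of_nonneg_right hm hg0.le]
  have hQpos : 0 < Q := lt_of_lt_of_le (by positivity) hQ0
  have hI : S * E * d < Q * (d ^ 2 + Y ^ 2) := by
    have h1 : (g * (1 + y ^ 2) / 2 + h * g * d) * (d ^ 2 + 9 / 25 * y ^ 2) ≤ Q * (d ^ 2 + Y ^ 2) := by
      apply mul_le_mul hQ0 (by linarith) (by positivity) hQpos.le
    refine lt_of_lt_of_le ?_ h1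
    have h2 : S * E * d = (E * g) * (g * d) + E * d * y ^ 2 := by rw [hS]; ring
    have h3 : (E * g) * (g * d) < ((1 / 2 + h * d) * d) * (g * d) :=
      mul_lt_mul_of_pos_right hconst (by positivity)
    have h4 : E * d * y ^ 2 ≤ (g * d ^ 2 / 2 + 9 / 25 * (g / 2)) * y ^ 2 :=
      mul_le_mul_of_nonneg_right hslope (sq_nonneg y)
    have h5 : 0 ≤ g * y ^ 2 / 2 * (9 / 25 * y ^ 2) := by positivity
    have h6 : 0 ≤ h * g * d * (9 / 25 * y ^ 2) := by positivity
    have h7 : (g * (1 + y ^ 2) / 2 + h * g * d) * (d ^ 2 + 9 / 25 * y ^ 2) =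
        ((1 / 2 + h * d) * d) * (g * d) + (g * d ^ 2 / 2 + 9 / 25 * (g / 2)) * y ^ 2
        + g * y ^ 2 / 2 * (9 / 25 * y ^ 2) + h * g * d * (9 / 25 * y ^ 2) := by ring
    rw [h2, h7]; linarith
  exact real_key_tail y Y X T m g h d E S Q hh0 hg0 hS0 hd0 hE2 hX hT hQ hQpos hI hre


open scoped Topology

lemma complex_key (α e : ℝ) (hα : 0 < α) (he0 : 0 ≤ e) (he : 4 * e ≤ α ^ 2) (h3 : α + 5 * e ≤ 3)
    (u q W : ℂ) (hu : -1 / 2 < u.re) (y m : ℝ) (hy : W = I * y) (hm : (1 + y ^ 2) / 2 ≤ m)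
    (hW : W = 1 - α + u + (α + (α + e) * u) * q)
    (hW' : u * (1 + u) + (α + e) * (u * (1 + u)) * q + (α + (α + e) * u) * (1 - q * W) = -(m : ℂ)) :
    False := by
  obtain ⟨x, hx⟩ : ∃ x, x = e / α := ⟨_, rfl⟩
  have hex : e = α * x := by rw [hx]; field_simp
  have hx0 : 0 ≤ x := by rw [hx]; positivity
  have hx1 : 0 < 1 + x := by linarith
  obtain ⟨g, hg⟩ : ∃ g, g = α - x / (1 + x) := ⟨_, rfl⟩
  obtain ⟨h, hh⟩ : ∃ h, h = x * (g + 1) / 2 := ⟨_, rfl⟩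
  obtain ⟨d, hd⟩ : ∃ d, d = (1 - x) / (1 + x) := ⟨_, rfl⟩
  obtain ⟨E, hE⟩ : ∃ E, E = 2 * x / (1 + x) ^ 2 := ⟨_, rfl⟩
  obtain ⟨X, hX⟩ : ∃ X, X = 1 + 2 * u.re + d := ⟨_, rfl⟩
  obtain ⟨Y, hY⟩ : ∃ Y, Y = 2 * u.im := ⟨_, rfl⟩
  have hd0 : -1 < d := by rw [hd, lt_div_iff₀ hx1]; linarith
  have hx4 : 4 * x ≤ α := by
    rw [hex] at he
    nlinarith
  have hdpos : 0 < d := by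
    rw [hd]; apply div_pos _ hx1
    rw [hex] at h3; nlinarith
  have hXd : d < X := by rw [hX]; linarith
  have hR : 0 < X ^ 2 + Y ^ 2 := by
    have : 0 < X := by linarith
    positivity
  obtain ⟨T, hT⟩ : ∃ T, T = E / (X ^ 2 + Y ^ 2) := ⟨_, rfl⟩
  have hT' : E = T * (X ^ 2 + Y ^ 2) := by rw [hT]; field_simp
  have hαc : (α : ℂ) ≠ 0 := by exact_mod_cast hα.ne'
  have hxc : (1 + x : ℂ) ≠ 0 := by exact_mod_cast hx1.ne'
  have key : (g + I * y) * ((1 + 2 * u - I * y) * (1 + 2 * u + d) - E) =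
      -((m : ℂ) + h * (1 + 2 * u + d)) * (1 + 2 * u + d) := by
    rw [hh, hg, hd, hE]
    rw [hex] at hW hW'
    push_cast at hW hW' ⊢
    rw [← hy]
    have e1 : (1 + 2 * u + (1 - x) / (1 + x)) = 2 / (α * (1 + x)) * (α + (α + α * x) * u) := by
      field_simp; ring
    have e2 : (2 / (α * (1 + x)) * (α + (α + α * x) * u)) * (u * (1 + u) + (m:ℂ) + (α + α * x) * u) +
       2 / (α * (1 + x)) * (((α + α * x) * (u * (1 + u))) - (α + (α + α * x) * u) * W) * (W - (1 - α + u)) + (2 / (α * (1 + x)) * (α + (α + α * x) * u)) * α = 0 := by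
      linear_combination (2 / (α * (1 + x)) * (α + (α + α * x) * u)) * hW' + 2 / (α * (1 + x)) * (((α + α * x) * (u * (1 + u))) - (α + (α + α * x) * u) * W) * hW
    field_simp at e2 ⊢
    linear_combination (2 * (1 + (x:ℂ)) ^ 2) * e2
  have hz : (1 + 2 * u + d : ℂ) = X + I * Y := by
    apply Complex.ext <;> simp [hX, hY]
  have hEz : (E : ℂ) = T * (X - I * Y) * (X + I * Y) := by
    rw [hT']; push_cast; linear_combination ((T : ℂ) * Y ^ 2) * I_sq
  have hw : (1 + 2 * u : ℂ) = X + I * Y - d := by rw [← hz]; ring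
  have hzne : (X + I * Y : ℂ) ≠ 0 := by
    intro h0
    have := congrArg Complex.re h0
    simp at this
    linarith
  rw [hz, hw, hEz] at key
  have key2 : (g + I * y) * ((X + I * Y - d - I * y) - T * (X - I * Y)) = -((m : ℂ) + h * (X + I * Y)) := by
    apply mul_right_cancel₀ hzne
    linear_combination key
  have key3 : ((g : ℂ) ^ 2 + y ^ 2) * ((X + I * Y - d - I * y) - T * (X - I * Y)) + ((m : ℂ) + h * (X + I * Y)) * (g - I * y) = 0 := by
    linear_combination (g - I * y) * key2 + ((y:ℂ) ^ 2 * ((X + I * Y - d - I * y) - T * (X - I * Y))) * I_sq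
  have hre := congrArg Complex.re key3
  have him := congrArg Complex.im key3
  have e0 : ((g : ℂ) ^ 2 + y ^ 2) = ((g ^ 2 + y ^ 2 : ℝ) : ℂ) := by push_cast; ring
  rw [e0] at hre him
  simp only [add_re, mul_re, sub_re, ofReal_re, ofReal_im, I_re, I_im, add_im, mul_im, sub_im, zero_re, zero_im] at hre him
  refine real_key x α y Y X T m g h d E (g ^ 2 + y ^ 2) hx0 hα hx4 ?_ hg hh hd hE rfl hm hXd hT' ?_ ?_
  · rw [hex] at h3; linarith
  · linear_combination hre
  · linear_combination him



lemma ball_induction (P : ℂ → Prop)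
    (hopen : ∀ z ∈ ball (0:ℂ) 1, P z → ∀ᶠ w in 𝓝 z, P w)
    (hstep : ∀ r, 0 ≤ r → r < 1 → (∀ z ∈ ball (0:ℂ) r, P z) → ∀ z ∈ sphere (0:ℂ) r, P z) :
    ∀ z ∈ ball (0:ℂ) 1, P z := by
  intro z hz
  by_contra hP
  rw [mem_ball_zero_iff] at hz
  have hcl : IsClosed {w : ℂ | ‖w‖ ≤ ‖z‖ ∧ ¬ P w} := by
    rw [← isOpen_compl_iff, isOpen_iff_mem_nhds]
    intro w hw
    by_cases h1 : ‖w‖ ≤ ‖z‖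
    · have h2 : P w := by
        by_contra h3
        exact hw ⟨h1, h3⟩
      filter_upwards [hopen w (by rw [mem_ball_zero_iff]; linarith) h2] with v hv hv'
      exact hv'.2 hv
    · push Not at h1
      have : ∀ᶠ v in 𝓝 w, ‖z‖ < ‖v‖ := continuous_norm.continuousAt.eventually_const_lt h1
      filter_upwards [this] with v hv hv'
      linarith [hv'.1]
  have hK : IsCompact {w : ℂ | ‖w‖ ≤ ‖z‖ ∧ ¬ P w} := by
    apply (isCompact_closedBall (0:ℂ) ‖z‖).of_isClosed_subset hcl
    intro w hw
    simpa using hw.1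
  obtain ⟨z0, hz0, hmin⟩ := hK.exists_isMinOn ⟨z, le_refl _, hP⟩ continuous_norm.continuousOn
  refine hz0.2 (hstep ‖z0‖ (norm_nonneg _) (by linarith [hz0.1]) ?_ z0 (by simp))
  intro w hw
  rw [mem_ball_zero_iff] at hw
  by_contra h3
  have := hmin (show w ∈ _ from ⟨by linarith [hz0.1], h3⟩)
  simp only [mem_ofPred_eq] at this
  linarith

lemma mocanu (W : ℂ → ℂ) (r : ℝ) (hr : 0 < r) (hd : ∀ z ∈ closedBall (0:ℂ) r, DifferentiableAt ℂ W z)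
    (hpos : ∀ z ∈ ball (0:ℂ) r, 0 < (W z).re) (h0 : W 0 = 1) (z0 : ℂ) (hz0 : z0 ∈ sphere (0:ℂ) r)
    (y : ℝ) (hy : W z0 = I * y) :
    ∃ m : ℝ, (1 + y ^ 2) / 2 ≤ m ∧ z0 * deriv W z0 = -(m : ℂ) := by
  have hz0n : ‖z0‖ = r := by simpa using hz0
  have hz0c : z0 ∈ closedBall (0:ℂ) r := sphere_subset_closedBall hz0
  have hnn : ∀ z ∈ closedBall (0:ℂ) r, 0 ≤ (W z).re := by
    have hc : ContinuousOn (fun z => (W z).re) (closedBall (0:ℂ) r) := fun z hz =>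
      (continuous_re.continuousAt.comp (hd z hz).continuousAt).continuousWithinAt
    rw [← closure_ball (0:ℂ) hr.ne'] at hc ⊢
    intro z hz
    exact le_on_closure (f := fun _ => (0:ℝ)) (fun w hw => (hpos w hw).le) continuousOn_const hc hz
  -- tangential
  have htan : (I * (z0 * deriv W z0)).re = 0 := by
    have hcurve : HasDerivAt (fun θ : ℝ => z0 * exp (θ * I)) (z0 * (exp ((0:ℝ) * I) * (1 * I))) 0 := by
      have h1 : HasDerivAt (fun θ : ℝ => (θ : ℂ) * I) (1 * I) 0 := (hasDerivAt_id (0:ℝ)).ofReal_comp.mul_const I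
      exact (h1.cexp).const_mul z0
    have hW : HasDerivAt W (deriv W z0) (z0 * exp ((0:ℝ) * I)) := by
      simpa using (hd z0 hz0c).hasDerivAt
    have hcomp := HasDerivAt.comp (0:ℝ) hW hcurve
    have hre : HasDerivAt (fun θ : ℝ => (W (z0 * exp (θ * I))).re) (deriv W z0 * (z0 * (exp ((0:ℝ) * I) * (1 * I)))).re 0 :=
      Complex.reCLM.hasFDerivAt.comp_hasDerivAt (0:ℝ) hcomp
    have hmin : IsLocalMin (fun θ : ℝ => (W (z0 * exp (θ * I))).re) 0 := by
      apply Filter.Eventually.of_forall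
      intro θ
      simp only [ofReal_zero, zero_mul, Complex.exp_zero, mul_one, hy]
      simp only [mul_re, I_re, I_im, ofReal_re, ofReal_im]
      have := hnn (z0 * exp (θ * I)) (by simp [Complex.norm_exp_ofReal_mul_I, hz0n])
      simpa using this
    have := hmin.hasDerivAt_eq_zero hre
    rw [← this]
    simp
    ring
  have hrad : (z0 * deriv W z0).re ≤ -(1 + y ^ 2) / 2 := by
    -- Schwarz
    have hsch : ∀ x : ℝ, 0 ≤ x → x < 1 → ‖1 - W (x * z0)‖ ≤ x * ‖1 + W (x * z0)‖ := by
      intro x hx0 hx1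
      have hmem : ∀ z ∈ ball (0:ℂ) r, 1 + W z ≠ 0 := by
        intro z hz h
        have := congrArg Complex.re h
        simp at this
        linarith [hpos z hz]
      have hdiff : DifferentiableOn ℂ (fun z => (1 - W z) / (1 + W z)) (ball 0 r) := by
        intro z hz
        have := hd z (ball_subset_closedBall hz)
        exact (((differentiableAt_const _).sub this).div ((differentiableAt_const _).add this) (hmem z hz)).differentiableWithinAt
      have hmaps : MapsTo (fun z => (1 - W z) / (1 + W z)) (ball 0 r) (ball ((fun z => (1 - W z) / (1 + W z)) 0) 1) := by
        intro z hz
        simp only [h0, sub_self, zero_div, mem_ball_zero_iff, norm_div]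
        rw [div_lt_one (norm_pos_iff.2 (hmem z hz))]
        apply lt_of_pow_lt_pow_left₀ 2 (norm_nonneg _)
        rw [← normSq_eq_norm_sq, ← normSq_eq_norm_sq, normSq_apply, normSq_apply]
        simp
        nlinarith [hpos z hz]
      have hxz : (x * z0 : ℂ) ∈ ball (0:ℂ) r := by
        simp [hz0n, abs_of_nonneg hx0]; nlinarith
      have := Complex.dist_le_div_mul_dist_of_mapsTo_ball hdiff (fun w hw => ball_subset_closedBall (hmaps hw)) hxz
      simp [h0, hz0n, abs_of_nonneg hx0] at this
      rw [div_le_iff₀ (norm_pos_iff.2 (hmem _ hxz))] at this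
      have e : r⁻¹ * (x * r) = x := by field_simp
      rwa [e] at this
    have hline : HasDerivAt (fun x : ℝ => (x : ℂ) * z0) (1 * z0) 1 :=
      (hasDerivAt_id (1:ℝ)).ofReal_comp.mul_const z0
    have hW : HasDerivAt W (deriv W z0) (((1:ℝ) : ℂ) * z0) := by
      simpa using (hd z0 hz0c).hasDerivAt
    have hcomp : HasDerivAt (fun x : ℝ => W (x * z0)) (deriv W z0 * (1 * z0)) 1 :=
      HasDerivAt.comp (1:ℝ) hW hline
    have hp := (hcomp.const_add 1).norm_sq
    have hq := (hcomp.const_sub 1).norm_sq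
    have hx := ((hasDerivAt_id (1:ℝ)).pow 2)
    have hk := (hx.mul hp).sub hq
    have hsl := hk.tendsto_slope.mono_left (nhdsWithin_mono (1:ℝ) (show Iio (1:ℝ) ⊆ {1}ᶜ from fun x hx => ne_of_lt hx))
    have hle := le_of_tendsto (b := (0:ℝ)) hsl (by
      have h01 : Ioo (0:ℝ) 1 ∈ 𝓝[<] (1:ℝ) := Ioo_mem_nhdsLT (by norm_num)
      filter_upwards [h01] with x hx
      rw [slope_def_field]
      apply div_nonpos_of_nonneg_of_nonpos _ (by linarith [hx.2])
      have hs := hsch x hx.1.le hx.2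
      have h1 : ‖1 + I * (y:ℂ)‖ ^ 2 = ‖1 - I * (y:ℂ)‖ ^ 2 := by
        rw [← normSq_eq_norm_sq, ← normSq_eq_norm_sq, normSq_apply, normSq_apply]
        simp
      simp [hy, h1]
      rw [← mul_pow]
      exact pow_le_pow_left₀ (norm_nonneg _) hs 2)
    simp [hy, inner, ← normSq_eq_norm_sq, normSq_apply] at hle
    simp
    linarith
  refine ⟨-(z0 * deriv W z0).re, by linarith, ?_⟩
  apply Complex.ext
  · simp
  · simp at htan ⊢
    linarith



lemma re_u_gt (z : ℂ) (hz : ‖z‖ < 1) : -1 / 2 < (z / (1 - z)).re := by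
  have h1 : (1 - z) ≠ 0 := by
    intro h
    have : z = 1 := by linear_combination -h
    rw [this] at hz
    simp at hz
  have hn : 0 < normSq (1 - z) := normSq_pos.2 h1
  have hz2 : normSq z < 1 := by
    rw [normSq_eq_norm_sq]
    nlinarith [norm_nonneg z]
  rw [div_re, ← add_div, lt_div_iff₀ hn]
  rw [normSq_apply] at *
  simp at *
  nlinarith

lemma f1_ne_zero (f1 f2 : ℂ → ℂ) (z0 : ℂ) (hz0 : z0 ≠ 0)
    (hc : ∀ x : ℝ, x ∈ Icc (0:ℝ) 1 → HasDerivAt f1 (f2 (x * z0)) (x * z0))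
    (h : ∀ x : ℝ, x ∈ Ioo (0:ℝ) 1 → f1 (x * z0) ≠ 0 ∧
      0 < (1 + (x * z0) * f2 (x * z0) / f1 (x * z0)).re) : f1 z0 ≠ 0 := by
  have hder : ∀ x : ℝ, x ∈ Icc (0:ℝ) 1 → HasDerivAt (fun x : ℝ => ‖(x : ℂ) * f1 (x * z0)‖ ^ 2)
      (2 * inner ℝ ((x : ℂ) * f1 (x * z0)) (1 * f1 (x * z0) + x * (f2 (x * z0) * (1 * z0)))) x := by
    intro x hx
    have hline : HasDerivAt (fun x : ℝ => (x : ℂ) * z0) (1 * z0) x :=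
      (hasDerivAt_id (x:ℝ)).ofReal_comp.mul_const z0
    have hcomp : HasDerivAt (fun x : ℝ => f1 (x * z0)) (f2 (x * z0) * (1 * z0)) x :=
      HasDerivAt.comp x (hc x hx) hline
    exact ((hasDerivAt_id (x:ℝ)).ofReal_comp.mul hcomp).norm_sq
  have hmono : StrictMonoOn (fun x : ℝ => ‖(x : ℂ) * f1 (x * z0)‖ ^ 2) (Icc 0 1) := by
    apply strictMonoOn_of_deriv_pos (convex_Icc 0 1)
    · intro x hx
      exact (hder x hx).continuousAt.continuousWithinAt
    · intro x hx
      rw [interior_Icc] at hx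
      rw [(hder x (Ioo_subset_Icc_self hx)).deriv]
      obtain ⟨hne, hpos⟩ := h x hx
      have e1 : (1 * f1 (x * z0) + x * (f2 (x * z0) * (1 * z0))) =
          f1 (x * z0) * (1 + (x * z0) * f2 (x * z0) / f1 (x * z0)) := by
        field_simp
      rw [e1]
      set w := f1 (x * z0)
      set v := 1 + (x * z0) * f2 (x * z0) / w
      have e2 : inner ℝ ((x : ℂ) * w) (w * v) = x * (normSq w * v.re) := by
        simp [inner, normSq_apply]; ring
      rw [e2]
      have := normSq_pos.2 hne
      have := hx.1
      positivity
  have := hmono (left_mem_Icc.2 zero_le_one) (right_mem_Icc.2 zero_le_one) zero_lt_one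
  intro h0
  simp [h0] at this

theorem reW_pos (α e : ℝ) (hα : 0 ≤ α) (he0 : 0 ≤ e) (he : 4 * e ≤ α ^ 2) (h3 : α + 5 * e ≤ 3)
    (F F' f1 f2 : ℂ → ℂ) (hF : ∀ z ∈ ball (0:ℂ) 1, HasDerivAt F (F' z) z)
    (hf1F : ∀ z ∈ ball (0:ℂ) 1, f1 z = F z + z * F' z)
    (hf1 : ∀ z ∈ ball (0:ℂ) 1, HasDerivAt f1 (f2 z) z)
    (hode : ∀ z ∈ ball (0:ℂ) 1, z * f2 z + α * (f1 z - F z) =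
      z * (z * f2 z + (α + 1) * f1 z + e * F z)) (hF0 : F 0 = 1) :
    ∀ z ∈ ball (0:ℂ) 1, f1 z ≠ 0 ∧ 0 < (1 + z * f2 z / f1 z).re := by
  have h1z : ∀ z ∈ ball (0:ℂ) 1, 1 - z ≠ 0 := by
    intro z hz h
    have : z = 1 := by linear_combination -h
    rw [this] at hz
    simp at hz
  obtain ⟨W, hWdef⟩ : ∃ W : ℂ → ℂ, W = fun z => 1 - α + z / (1 - z) + (α + (α + e) * (z / (1 - z))) * (F z / f1 z) := ⟨_, rfl⟩
  have hWeq : ∀ z ∈ ball (0:ℂ) 1, f1 z ≠ 0 → 1 + z * f2 z / f1 z = W z := by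
    intro z hz hne
    have := h1z z hz
    rw [hWdef]
    simp only
    field_simp
    linear_combination hode z hz
  have hWder : ∀ z ∈ ball (0:ℂ) 1, f1 z ≠ 0 → HasDerivAt W
      ((1 * (1 - z) - z * (-1)) / (1 - z) ^ 2 + (((α + e) * ((1 * (1 - z) - z * (-1)) / (1 - z) ^ 2)) * (F z / f1 z) +
        (α + (α + e) * (z / (1 - z))) * ((F' z * f1 z - F z * f2 z) / f1 z ^ 2))) z := by
    intro z hz hne
    rw [hWdef]
    have hu : HasDerivAt (fun z : ℂ => z / (1 - z)) ((1 * (1 - z) - z * (-1)) / (1 - z) ^ 2) z :=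
      (hasDerivAt_id z).div ((hasDerivAt_id z).const_sub 1) (h1z z hz)
    exact (hu.const_add (1 - α : ℂ)).add (((hu.const_mul (α + e : ℂ)).const_add (α : ℂ)).mul ((hF z hz).div (hf1 z hz) hne))
  have hW0 : W 0 = 1 := by
    have : f1 0 = 1 := by rw [hf1F 0 (by simp)]; simp [hF0]
    rw [hWdef]; simp [this, hF0]
  suffices H : ∀ z ∈ ball (0:ℂ) 1, f1 z ≠ 0 ∧ 0 < (W z).re by
    intro z hz
    rw [hWeq z hz (H z hz).1]
    exact H z hz
  apply ball_induction
  · intro z hz hP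
    have c1 : ∀ᶠ w in 𝓝 z, f1 w ≠ 0 := (hf1 z hz).continuousAt.eventually_ne hP.1
    have c2 : ∀ᶠ w in 𝓝 z, 0 < (W w).re :=
      (continuous_re.continuousAt.comp (hWder z hz hP.1).continuousAt).eventually_const_lt hP.2
    exact c1.and c2
  · intro r hr0 hr1 hP
    rcases hr0.eq_or_lt with rfl | hr0
    · intro z hz
      have hz' : z = 0 := by simpa using hz
      rw [hz', hW0, hf1F 0 (by simp)]
      simp [hF0]
    have hsub : closedBall (0:ℂ) r ⊆ ball 0 1 := closedBall_subset_ball hr1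
    have hne : ∀ z ∈ closedBall (0:ℂ) r, f1 z ≠ 0 := by
      intro z hz
      by_cases hzb : z ∈ ball (0:ℂ) r
      · exact (hP z hzb).1
      have hzr : ‖z‖ = r := by
        simp at hz hzb; linarith
      have hin : ∀ x : ℝ, x ∈ Icc (0:ℝ) 1 → (x * z : ℂ) ∈ ball (0:ℂ) 1 := by
        intro x hx
        simp [abs_of_nonneg hx.1, hzr]
        nlinarith [hx.1, hx.2]
      apply f1_ne_zero f1 f2 z
      · intro h; rw [h] at hzr; simp at hzr; linarith
      · intro x hx
        exact hf1 _ (hin x hx)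
      · intro x hx
        have hin' : (x * z : ℂ) ∈ ball (0:ℂ) r := by
          simp [abs_of_nonneg hx.1.le, hzr]
          nlinarith [hx.1, hx.2]
        have := hP _ hin'
        rw [hWeq _ (hin x (Ioo_subset_Icc_self hx)) this.1]
        exact this
    intro z0 hz0
    have hz0c := sphere_subset_closedBall hz0
    have hz0b := hsub hz0c
    refine ⟨hne z0 hz0c, ?_⟩
    have hnn : 0 ≤ (W z0).re := by
      have hc : ContinuousOn (fun z => (W z).re) (closedBall (0:ℂ) r) := fun z hz =>
        (continuous_re.continuousAt.comp (hWder z (hsub hz) (hne z hz)).continuousAt).continuousWithinAt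
      rw [← closure_ball (0:ℂ) hr0.ne'] at hc hz0c
      exact le_on_closure (f := fun _ => (0:ℝ)) (fun w hw => (hP w hw).2.le) continuousOn_const hc hz0c
    rcases hnn.lt_or_eq with h | h
    · exact h
    exfalso
    have hy : W z0 = I * ((W z0).im : ℝ) := by
      apply Complex.ext <;> simp [← h]
    obtain ⟨m, hm, hm'⟩ := mocanu W r hr0 (fun z hz => (hWder z (hsub hz) (hne z hz)).differentiableAt)
      (fun z hz => (hP z hz).2) hW0 z0 hz0 _ hy
    have hu := re_u_gt z0 (by simpa using hz0b)
    rcases hα.eq_or_lt with h0 | h0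
    · have he' : e = 0 := by rw [← h0] at he; linarith
      rw [hWdef] at h
      simp [← h0, he'] at h
      linarith
    refine complex_key α e h0 he0 he h3 (z0 / (1 - z0)) (F z0 / f1 z0) (W z0) hu _ m hy hm ?_ ?_
    · rw [hWdef]
    · rw [← hm', (hWder z0 hz0b (hne z0 hz0c)).deriv, ← hWeq z0 hz0b (hne z0 hz0c)]
      have a1 := h1z z0 hz0b
      have a2 := hne z0 hz0c
      have a3 : z0 * F' z0 = f1 z0 - F z0 := by rw [hf1F z0 hz0b]; ring
      have e1 : z0 * ((F' z0 * f1 z0 - F z0 * f2 z0) / f1 z0 ^ 2) = 1 - F z0 / f1 z0 * (1 + z0 * f2 z0 / f1 z0) := by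
        field_simp
        linear_combination f1 z0 * a3
      have e2 : z0 * ((1 * (1 - z0) - z0 * (-1)) / (1 - z0) ^ 2) = z0 / (1 - z0) * (1 + z0 / (1 - z0)) := by
        field_simp; ring
      rw [← e1, ← e2]; ring



/-- second derivative test contradiction -/
lemma no_local_max (γ v : ℝ → ℂ) (t0 : ℝ) (v' : ℂ) (hγ : ∀ᶠ t in 𝓝 t0, HasDerivAt γ (v t) t)
    (hv : HasDerivAt v v' t0) (hmax : IsLocalMax (fun t => ‖γ t‖ ^ 2) t0)
    (hpos : (inner ℝ (γ t0) (v t0) : ℝ) = 0 → 0 < (inner ℝ (v t0) (v t0) + inner ℝ (γ t0) v' : ℝ)) : False := by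
  have h1 : ∀ᶠ t in 𝓝 t0, HasDerivAt (fun t => ‖γ t‖ ^ 2) (2 * inner ℝ (γ t) (v t)) t :=
    hγ.mono fun t ht => ht.norm_sq
  have hd : deriv (fun t => ‖γ t‖ ^ 2) =ᶠ[𝓝 t0] fun t => 2 * inner ℝ (γ t) (v t) :=
    h1.mono fun t ht => ht.deriv
  have h0 : (2 * inner ℝ (γ t0) (v t0) : ℝ) = 0 := hmax.hasDerivAt_eq_zero h1.self_of_nhds
  have h2 : HasDerivAt (fun t => (2 * inner ℝ (γ t) (v t) : ℝ)) (2 * (inner ℝ (γ t0) v' + inner ℝ (v t0) (v t0))) t0 :=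
    ((hγ.self_of_nhds).inner ℝ hv).const_mul 2
  have hdd : deriv (deriv (fun t => ‖γ t‖ ^ 2)) t0 = 2 * (inner ℝ (γ t0) v' + inner ℝ (v t0) (v t0)) := by
    rw [hd.deriv_eq, h2.deriv]
  have hp := hpos (by linarith)
  have hmin := isLocalMin_of_deriv_deriv_pos (f := fun t => ‖γ t‖ ^ 2) (x₀ := t0) (by rw [hdd]; linarith)
    (by rw [hd.self_of_nhds]; exact h0) h1.self_of_nhds.continuousAt
  have hconst : (fun t => ‖γ t‖ ^ 2) =ᶠ[𝓝 t0] fun _ => ‖γ t0‖ ^ 2 := by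
    filter_upwards [hmin, hmax] with t h3 h4
    exact le_antisymm h4 h3
  have : deriv (deriv (fun t => ‖γ t‖ ^ 2)) t0 = 0 := by
    rw [hconst.deriv.deriv_eq]; simp
  linarith

section convex
variable (f f1 f2 : ℂ → ℂ)

lemma inv_deriv (r : ℝ) (hf : ∀ z ∈ ball (0:ℂ) r, HasDerivAt f (f1 z) z)
    (hf1 : ∀ z ∈ ball (0:ℂ) r, HasDerivAt f1 (f2 z) z) (hne : ∀ z ∈ ball (0:ℂ) r, f1 z ≠ 0)
    (hinj : InjOn f (ball (0:ℂ) r)) :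
    ∃ g : ℂ → ℂ, (∀ z ∈ ball (0:ℂ) r, g (f z) = z) ∧ (∀ z ∈ ball (0:ℂ) r, HasDerivAt g (f1 z)⁻¹ (f z)) ∧
      IsOpen (f '' ball (0:ℂ) r) := by
  have hinv : ∀ z ∈ ball (0:ℂ) r, Function.invFunOn f (ball (0:ℂ) r) (f z) = z :=
    fun z hz => hinj.leftInvOn_invFunOn hz
  have hmap : ∀ z ∈ ball (0:ℂ) r, map f (𝓝 z) = 𝓝 (f z) := by
    intro z hz
    have hs : HasStrictDerivAt f (f1 z) z := by
      apply hasStrictDerivAt_of_hasDerivAt_of_continuousAt (f' := f1)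
      · filter_upwards [isOpen_ball.mem_nhds hz] with w hw using hf w hw
      · exact (hf1 z hz).continuousAt
    exact hs.map_nhds_eq (hne z hz)
  refine ⟨Function.invFunOn f (ball (0:ℂ) r), hinv, ?_, ?_⟩
  · intro z hz
    have hcont : ContinuousAt (Function.invFunOn f (ball (0:ℂ) r)) (f z) := by
      rw [ContinuousAt, hinv z hz, ← hmap z hz, tendsto_map'_iff]
      apply tendsto_id.congr'
      filter_upwards [isOpen_ball.mem_nhds hz] with w hw
      exact (hinv w hw).symm
    apply HasDerivAt.of_local_left_inverse hcont (by rw [hinv z hz]; exact hf z hz) (hne z hz)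
    rw [← hmap z hz, eventually_map]
    filter_upwards [isOpen_ball.mem_nhds hz] with w hw
    rw [hinv w hw]
  · rw [isOpen_iff_mem_nhds]
    rintro _ ⟨z, hz, rfl⟩
    rw [← hmap z hz]
    exact image_mem_map (isOpen_ball.mem_nhds hz)

lemma segment_bound (r ρ : ℝ) (hf : ∀ z ∈ ball (0:ℂ) r, HasDerivAt f (f1 z) z)
    (hf1 : ∀ z ∈ ball (0:ℂ) r, HasDerivAt f1 (f2 z) z) (hne : ∀ z ∈ ball (0:ℂ) r, f1 z ≠ 0)
    (hcv : ∀ z ∈ ball (0:ℂ) r, 0 < (1 + z * f2 z / f1 z).re)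
    (hinj : InjOn f (ball (0:ℂ) r)) (z1 z2 : ℂ) (hz1 : z1 ∈ ball (0:ℂ) r) (hz2 : z2 ∈ ball (0:ℂ) r)
    (hρ1 : ‖z1‖ ≤ ρ) (hρ2 : ‖z2‖ ≤ ρ)
    (hseg : ∀ t ∈ Icc (0:ℝ) 1, f z1 + t * (f z2 - f z1) ∈ f '' ball (0:ℂ) r) :
    ∀ t ∈ Icc (0:ℝ) 1, f z1 + t * (f z2 - f z1) ∈ f '' closedBall (0:ℂ) ρ := by
  have hρ0 : 0 ≤ ρ := (norm_nonneg _).trans hρ1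
  obtain ⟨g, hg, hg', hopen⟩ := inv_deriv f f1 f2 r hf hf1 hne hinj
  by_cases hc0 : f z2 - f z1 = 0
  · intro t _
    exact ⟨z1, by simpa using hρ1, by simp [hc0]⟩
  set c := f z2 - f z1 with hc
  obtain ⟨γ, hγ⟩ : ∃ γ : ℝ → ℂ, γ = fun t : ℝ => g (f z1 + (t:ℂ) * c) := ⟨_, rfl⟩
  have hγmem : ∀ t : ℝ, f z1 + t * c ∈ f '' ball (0:ℂ) r → γ t ∈ ball (0:ℂ) r ∧ f (γ t) = f z1 + t * c ∧
      HasDerivAt γ (c / f1 (γ t)) t := by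
    rintro t ⟨z, hz, hzt⟩
    have e1 : γ t = z := by rw [hγ]; simp only; rw [← hzt, hg z hz]
    rw [e1]
    refine ⟨hz, hzt, ?_⟩
    have hline : HasDerivAt (fun x : ℝ => f z1 + (x : ℂ) * c) (1 * c) t :=
      ((hasDerivAt_id t).ofReal_comp.mul_const c).const_add _
    have := hg' z hz
    rw [hzt] at this
    rw [hγ]
    convert! HasDerivAt.comp t this hline using 1
    ring
  have hγ0 : γ 0 = z1 := by rw [hγ]; simp [hg z1 hz1]
  have hγ1 : γ 1 = z2 := by rw [hγ]; simp [hc, hg z2 hz2]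
  suffices hb : ∀ t ∈ Icc (0:ℝ) 1, ‖γ t‖ ^ 2 ≤ ρ ^ 2 by
    intro t ht
    refine ⟨γ t, ?_, (hγmem t (hseg t ht)).2.1⟩
    simpa using (pow_le_pow_iff_left₀ (norm_nonneg _) hρ0 two_ne_zero).1 (hb t ht)
  have hcont : ContinuousOn (fun t => ‖γ t‖ ^ 2) (Icc (0:ℝ) 1) := fun t ht =>
    ((hγmem t (hseg t ht)).2.2.norm_sq).continuousAt.continuousWithinAt
  obtain ⟨t0, ht0, hmax⟩ := isCompact_Icc.exists_isMaxOn ⟨0, left_mem_Icc.2 zero_le_one⟩ hcont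
  intro t ht
  refine (hmax ht).trans ?_
  simp only
  by_contra hcon
  push Not at hcon
  have ht00 : t0 ≠ 0 := by
    rintro rfl
    rw [hγ0] at hcon
    have := pow_le_pow_left₀ (norm_nonneg _) hρ1 2
    linarith
  have ht01 : t0 ≠ 1 := by
    rintro rfl
    rw [hγ1] at hcon
    have := pow_le_pow_left₀ (norm_nonneg _) hρ2 2
    linarith
  have ht0' : t0 ∈ Ioo (0:ℝ) 1 := ⟨lt_of_le_of_ne ht0.1 ht00.symm, lt_of_le_of_ne ht0.2 ht01⟩
  have hnh : Ioo (0:ℝ) 1 ∈ 𝓝 t0 := Ioo_mem_nhds ht0'.1 ht0'.2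
  obtain ⟨hb0, _, hd0⟩ := hγmem t0 (hseg t0 ht0)
  have hv : HasDerivAt (fun t => c / f1 (γ t)) ((0 * f1 (γ t0) - c * (f2 (γ t0) * (c / f1 (γ t0)))) / f1 (γ t0) ^ 2) t0 :=
    (hasDerivAt_const t0 c).div (HasDerivAt.comp t0 (hf1 _ hb0) hd0) (hne _ hb0)
  refine no_local_max γ (fun t => c / f1 (γ t)) t0 _ ?_ hv ?_ ?_
  · filter_upwards [hnh] with t ht
    exact (hγmem t (hseg t (Ioo_subset_Icc_self ht))).2.2
  · filter_upwards [hnh] with t ht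
    exact hmax (Ioo_subset_Icc_self ht)
  · intro hz
    have hn := hne _ hb0
    have hp := hcv _ hb0
    have e1 : (0 * f1 (γ t0) - c * (f2 (γ t0) * (c / f1 (γ t0)))) / f1 (γ t0) ^ 2 =
      - (c / f1 (γ t0)) ^ 2 * (f2 (γ t0) / f1 (γ t0)) := by field_simp; ring
    rw [e1]
    rw [mul_div_assoc] at hp
    have hv0 : c / f1 (γ t0) ≠ 0 := div_ne_zero hc0 hn
    generalize c / f1 (γ t0) = v at *
    generalize f2 (γ t0) / f1 (γ t0) = k at *
    generalize γ t0 = w at *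
    have hvp : 0 < normSq v := normSq_pos.2 hv0
    have := mul_pos hvp hp
    rw [normSq_apply] at this
    simp [inner, pow_two] at this hz ⊢
    have e2 : v.re * w.re + v.im * w.im = 0 := by linarith
    refine lt_of_lt_of_eq this ?_
    linear_combination (2 * (v.re * k.re - v.im * k.im)) * e2

lemma image_convex (r : ℝ) (hf : ∀ z ∈ ball (0:ℂ) r, HasDerivAt f (f1 z) z)
    (hf1 : ∀ z ∈ ball (0:ℂ) r, HasDerivAt f1 (f2 z) z) (hne : ∀ z ∈ ball (0:ℂ) r, f1 z ≠ 0)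
    (hcv : ∀ z ∈ ball (0:ℂ) r, 0 < (1 + z * f2 z / f1 z).re)
    (hinj : InjOn f (ball (0:ℂ) r)) : Convex ℝ (f '' ball (0:ℂ) r) := by
  rw [convex_iff_segment_subset]
  rintro _ ⟨z1, hz1, rfl⟩ _ ⟨z2, hz2, rfl⟩
  obtain ⟨g, hg, hg', hopen⟩ := inv_deriv f f1 f2 r hf hf1 hne hinj
  have hfc : ContinuousOn f (ball (0:ℂ) r) := fun z hz => (hf z hz).continuousAt.continuousWithinAt
  set ρ := max ‖z1‖ ‖z2‖ with hρ
  have hρr : ρ < r := max_lt (by simpa using hz1) (by simpa using hz2)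
  have hsub : closedBall (0:ℂ) ρ ⊆ ball 0 r := closedBall_subset_ball hρr
  have hK : IsClosed (f '' closedBall (0:ℂ) ρ) :=
    ((isCompact_closedBall _ _).image_of_continuousOn (hfc.mono hsub)).isClosed
  obtain ⟨σ, hσ⟩ : ∃ σ : ℝ → ℝ, σ = fun s => max 0 (min s 1) := ⟨_, rfl⟩
  have hσc : Continuous σ := by rw [hσ]; fun_prop
  have hσm : ∀ s, 0 ≤ σ s ∧ σ s ≤ 1 := fun s => by rw [hσ]; simp
  have hm : ∀ z : ℂ, ‖z‖ ≤ ρ → ∀ s, ‖(σ s : ℂ) * z‖ ≤ ρ := by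
    intro z hz s
    rw [norm_mul, norm_real, Real.norm_eq_abs, abs_of_nonneg (hσm s).1]
    exact (mul_le_of_le_one_left (norm_nonneg _) (hσm s).2).trans hz
  have hm1 := hm z1 (le_max_left _ _)
  have hm2 := hm z2 (le_max_right _ _)
  have hb : ∀ z : ℂ, ‖z‖ ≤ ρ → z ∈ ball (0:ℂ) r := fun z hz => hsub (by simpa using hz)
  have hp : ∀ z : ℂ, ‖z‖ ≤ ρ → Continuous fun s => f ((σ s : ℂ) * z) := by
    intro z hz
    exact hfc.comp_continuous (by fun_prop) fun s => hb _ (hm z hz s)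
  have hp1 := hp z1 (le_max_left _ _)
  have hp2 := hp z2 (le_max_right _ _)
  set p1 := fun s => f ((σ s : ℂ) * z1) with hp1d
  set p2 := fun s => f ((σ s : ℂ) * z2) with hp2d
  have key : ∀ s, (∀ t ∈ Icc (0:ℝ) 1, p1 s + t * (p2 s - p1 s) ∈ f '' ball (0:ℂ) r) →
      ∀ t ∈ Icc (0:ℝ) 1, p1 s + t * (p2 s - p1 s) ∈ f '' closedBall (0:ℂ) ρ := by
    intro s
    exact segment_bound f f1 f2 r ρ hf hf1 hne hcv hinj _ _ (hb _ (hm1 s)) (hb _ (hm2 s)) (hm1 s) (hm2 s)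
  have hclosed : IsClosed {s : ℝ | ∀ t ∈ Icc (0:ℝ) 1, p1 s + t * (p2 s - p1 s) ∈ f '' closedBall (0:ℂ) ρ} := by
    simp only [ofPred_forall]
    refine isClosed_iInter fun t => isClosed_iInter fun _ => ?_
    exact hK.preimage (f := fun s => p1 s + t * (p2 s - p1 s)) (by fun_prop)
  have hop : IsOpen {s : ℝ | ∀ t ∈ Icc (0:ℝ) 1, p1 s + t * (p2 s - p1 s) ∈ f '' closedBall (0:ℂ) ρ} := by
    rw [isOpen_iff_mem_nhds]
    intro s hs
    have : ∀ᶠ s' in 𝓝 s, ∀ t ∈ Icc (0:ℝ) 1, p1 s' + t * (p2 s' - p1 s') ∈ f '' ball (0:ℂ) r := by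
      apply isCompact_Icc.eventually_forall_of_forall_eventually
      intro t ht
      have hc : Continuous fun q : ℝ × ℝ => p1 q.1 + q.2 * (p2 q.1 - p1 q.1) := by fun_prop
      exact hc.continuousAt (hopen.mem_nhds (image_mono hsub (hs t ht)))
    filter_upwards [this] with s' hs'
    exact key s' hs'
  have huniv := IsClopen.eq_univ ⟨hclosed, hop⟩ ⟨0, by
    intro t _
    refine ⟨0, by simp [hρ], ?_⟩
    simp [hp1d, hp2d, hσ]⟩
  have h1 : (1:ℝ) ∈ {s : ℝ | ∀ t ∈ Icc (0:ℝ) 1, p1 s + t * (p2 s - p1 s) ∈ f '' closedBall (0:ℂ) ρ} := by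
    rw [huniv]; trivial
  have e1 : p1 1 = f z1 := by simp [hp1d, hσ]
  have e2 : p2 1 = f z2 := by simp [hp2d, hσ]
  rw [mem_ofPred_eq, e1, e2] at h1
  rw [segment_eq_image']
  rintro _ ⟨t, ht, rfl⟩
  exact image_mono hsub (by simpa using h1 t ht)

lemma inj_of_convex (hf : ∀ z ∈ ball (0:ℂ) 1, HasDerivAt f (f1 z) z)
    (hf1 : ∀ z ∈ ball (0:ℂ) 1, HasDerivAt f1 (f2 z) z) (hne : ∀ z ∈ ball (0:ℂ) 1, f1 z ≠ 0)
    (hcv : ∀ z ∈ ball (0:ℂ) 1, 0 < (1 + z * f2 z / f1 z).re) : InjOn f (ball (0:ℂ) 1) := by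
  have main : ∀ z ∈ ball (0:ℂ) 1, InjOn f (closedBall (0:ℂ) ‖z‖) := by
    apply ball_induction
    · intro z hz hP
      have hsub : closedBall (0:ℂ) ‖z‖ ⊆ ball 0 1 := closedBall_subset_ball (by simpa using hz)
      obtain ⟨t, hto, hst, htinj⟩ := hP.exists_isOpen_superset (isCompact_closedBall _ _)
        (fun x hx => (hf x (hsub hx)).continuousAt) (by
          intro x hx
          have hs : HasStrictDerivAt f (f1 x) x := by
            apply hasStrictDerivAt_of_hasDerivAt_of_continuousAt (f' := f1)
            · filter_upwards [isOpen_ball.mem_nhds (hsub hx)] with w hw using hf w hw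
            · exact (hf1 x (hsub hx)).continuousAt
          refine ⟨_, hs.eventually_left_inverse (hne x (hsub hx)), ?_⟩
          intro p hp q hq hpq
          have hp' : hs.localInverse f (f1 x) x (hne x (hsub hx)) (f p) = p := hp
          have hq' : hs.localInverse f (f1 x) x (hne x (hsub hx)) (f q) = q := hq
          rw [← hp', ← hq', hpq])
      obtain ⟨δ, hδ, hδt⟩ := (isCompact_closedBall (0:ℂ) ‖z‖).exists_cthickening_subset_open hto hst
      rw [cthickening_closedBall hδ.le (norm_nonneg _)] at hδt
      have : ∀ᶠ w in 𝓝 z, ‖w‖ < δ + ‖z‖ :=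
        continuous_norm.continuousAt.eventually_lt continuousAt_const (by linarith)
      filter_upwards [this] with w hw
      exact htinj.mono ((closedBall_subset_closedBall hw.le).trans hδt)
    · intro r hr0 hr1 hball z hz
      have hz' : ‖z‖ = r := by simpa using hz
      rw [hz']
      have hsub : closedBall (0:ℂ) r ⊆ ball 0 1 := closedBall_subset_ball hr1
      have hsub' : ball (0:ℂ) r ⊆ ball 0 1 := ball_subset_ball hr1.le
      have hinj : InjOn f (ball (0:ℂ) r) := by
        intro x hx y hy hxy
        rcases le_total ‖x‖ ‖y‖ with h | h
        · exact hball y hy (by simpa using h) (by simp) hxy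
        · exact hball x hx (by simp) (by simpa using h) hxy
      have hf' : ∀ z ∈ ball (0:ℂ) r, HasDerivAt f (f1 z) z := fun z hz => hf z (hsub' hz)
      have hf1' : ∀ z ∈ ball (0:ℂ) r, HasDerivAt f1 (f2 z) z := fun z hz => hf1 z (hsub' hz)
      have hne' : ∀ z ∈ ball (0:ℂ) r, f1 z ≠ 0 := fun z hz => hne z (hsub' hz)
      have hconv := image_convex f f1 f2 r hf' hf1' hne' (fun z hz => hcv z (hsub' hz)) hinj
      obtain ⟨g, hg, hg', hopen⟩ := inv_deriv f f1 f2 r hf' hf1' hne' hinj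
      rcases hr0.eq_or_lt with rfl | hr
      · simp
      have hcont : ContinuousOn (fun z => ‖(f1 z)⁻¹‖) (closedBall (0:ℂ) r) := fun z hz =>
        (((hf1 z (hsub hz)).continuousAt.inv₀ (hne z (hsub hz))).norm).continuousWithinAt
      obtain ⟨M, hM⟩ := ((isCompact_closedBall (0:ℂ) r).bddAbove_image hcont)
      have hM' : ∀ z ∈ closedBall (0:ℂ) r, ‖(f1 z)⁻¹‖ ≤ M := fun z hz => hM ⟨z, hz, rfl⟩
      have hlip : ∀ x ∈ ball (0:ℂ) r, ∀ y ∈ ball (0:ℂ) r, ‖y - x‖ ≤ M * ‖f y - f x‖ := by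
        intro x hx y hy
        have := hconv.norm_image_sub_le_of_norm_hasDerivWithin_le (f := g) (f' := fun w => (f1 (g w))⁻¹) (C := M)
          (by
            rintro _ ⟨w, hw, rfl⟩
            rw [hg w hw]
            exact (hg' w hw).hasDerivWithinAt)
          (by
            rintro _ ⟨w, hw, rfl⟩
            rw [hg w hw]
            exact hM' w (ball_subset_closedBall hw)) (mem_image_of_mem f hx) (mem_image_of_mem f hy)
        rwa [hg x hx, hg y hy] at this
      intro x hx y hy hxy
      have hlim : ∀ w ∈ closedBall (0:ℂ) r, Tendsto (fun s : ℝ => (s:ℂ) * w) (𝓝[<] 1) (𝓝 w) := by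
        intro w hw
        have : ContinuousAt (fun s : ℝ => (s:ℂ) * w) 1 := by fun_prop
        simpa using this.tendsto.mono_left nhdsWithin_le_nhds
      have hin : ∀ w ∈ closedBall (0:ℂ) r, ∀ᶠ s : ℝ in 𝓝[<] 1, (s:ℂ) * w ∈ ball (0:ℂ) r := by
        intro w hw
        filter_upwards [Ioo_mem_nhdsLT (zero_lt_one' ℝ)] with s hs
        rw [mem_ball_zero_iff, norm_mul, norm_real, Real.norm_eq_abs, abs_of_pos hs.1]
        rw [mem_closedBall_zero_iff] at hw
        nlinarith [hs.1, hs.2]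
      have hflim : ∀ w ∈ closedBall (0:ℂ) r, Tendsto (fun s : ℝ => f ((s:ℂ) * w)) (𝓝[<] 1) (𝓝 (f w)) :=
        fun w hw => (hf w (hsub hw)).continuousAt.tendsto.comp (hlim w hw)
      have hfin : ‖y - x‖ ≤ M * ‖f y - f x‖ := by
        refine le_of_tendsto_of_tendsto (((hlim y hy).sub (hlim x hx)).norm)
          ((((hflim y hy).sub (hflim x hx)).norm).const_mul M) ?_
        filter_upwards [hin x hx, hin y hy] with s h1 h2
        exact hlip _ h1 _ h2
      rw [hxy, sub_self, norm_zero, mul_zero] at hfin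
      exact (sub_eq_zero.1 (norm_le_zero_iff.1 hfin)).symm
  intro x hx y hy hxy
  rcases le_total ‖x‖ ‖y‖ with h | h
  · exact main y hy (by simpa using h) (by simp) hxy
  · exact main x hx (by simp) (by simpa using h) hxy
end convex


lemma ps_summable (c : ℕ → ℂ) (hc : ∀ n, ‖c n‖ ≤ n + 1) (z : ℂ) (hz : z ∈ ball (0:ℂ) 1) :
    Summable fun n => c n * z ^ n := by
  have hz1 : ‖‖z‖‖ < 1 := by simpa using hz
  have h1 := summable_pow_mul_geometric_of_norm_lt_one 1 hz1
  have h0 := summable_pow_mul_geometric_of_norm_lt_one 0 hz1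
  refine Summable.of_norm_bounded (h1.add h0) fun n => ?_
  rw [norm_mul, norm_pow]
  have := mul_le_mul_of_nonneg_right (hc n) (pow_nonneg (norm_nonneg z) n)
  linarith

lemma ps_deriv (c : ℕ → ℂ) (hc : ∀ n, ‖c n‖ ≤ n + 1) (z : ℂ) (hz : z ∈ ball (0:ℂ) 1) :
    Summable (fun n : ℕ => ((n:ℂ) + 1) * c (n + 1) * z ^ n) ∧
    HasDerivAt (fun w => ∑' n, c n * w ^ n) (∑' n : ℕ, ((n:ℂ) + 1) * c (n + 1) * z ^ n) z := by
  rw [mem_ball_zero_iff] at hz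
  obtain ⟨ρ, hzρ, hρ1⟩ := exists_between hz
  have hρ0 : 0 < ρ := (norm_nonneg z).trans_lt hzρ
  have hρn : ‖ρ‖ < 1 := by rwa [Real.norm_eq_abs, abs_of_pos hρ0]
  have hu : Summable fun n : ℕ => ((n:ℝ) + 1) * (n * ρ ^ (n - 1)) := by
    rw [← summable_nat_add_iff 1]
    have h2 := summable_pow_mul_geometric_of_norm_lt_one 2 hρn
    have h1 := summable_pow_mul_geometric_of_norm_lt_one 1 hρn
    have h0 := summable_pow_mul_geometric_of_norm_lt_one 0 hρn
    refine ((h2.add (h1.mul_left 3)).add (h0.mul_left 2)).congr fun n => ?_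
    push_cast [Nat.add_sub_cancel]
    ring
  have hbd : ∀ n : ℕ, ∀ w ∈ ball (0:ℂ) ρ, ‖c n * ((n:ℂ) * w ^ (n - 1))‖ ≤ ((n:ℝ) + 1) * (n * ρ ^ (n - 1)) := by
    intro n w hw
    rw [mem_ball_zero_iff] at hw
    rw [norm_mul, norm_mul, norm_pow, Complex.norm_natCast]
    gcongr
    exact hc n
  have hzb : z ∈ ball (0:ℂ) ρ := by simpa using hzρ
  have hD := hasDerivAt_tsum_of_isPreconnected (g := fun n w => c n * w ^ n)
    (g' := fun (n:ℕ) w => c n * ((n:ℂ) * w ^ (n - 1))) hu isOpen_ball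
    (convex_ball (0:ℂ) ρ).isPreconnected (fun n w _ => (hasDerivAt_pow n w).const_mul (c n)) hbd
    hzb (ps_summable c hc z (by simpa using hz)) hzb
  have hs : Summable fun n : ℕ => c n * ((n:ℂ) * z ^ (n - 1)) :=
    Summable.of_norm_bounded hu fun n => hbd n z hzb
  have e : (fun n : ℕ => c (n+1) * (((n+1:ℕ):ℂ) * z ^ (n + 1 - 1))) = fun n : ℕ => ((n:ℂ) + 1) * c (n + 1) * z ^ n := by
    funext n
    rw [Nat.add_sub_cancel]; push_cast; ring
  have hs1 := (summable_nat_add_iff 1).2 hs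
  rw [e] at hs1
  refine ⟨hs1, ?_⟩
  rw [hs.tsum_eq_zero_add] at hD
  simp only [Nat.cast_zero, zero_mul, mul_zero, zero_add] at hD
  rwa [e] at hD

/-- the coefficients -/
noncomputable def hypA (a b : ℝ) (n : ℕ) : ℝ :=
  (ascPochhammer ℝ n).eval a * (ascPochhammer ℝ n).eval b /
      ((ascPochhammer ℝ n).eval (a + b) * (n.factorial : ℝ))

lemma hypA_rec (a b : ℝ) (ha : 1 ≤ a) (hb : 1 ≤ b) (n : ℕ) :
    ((n:ℝ) + 1) * (n + (a + b)) * hypA a b (n + 1) = (a + n) * (b + n) * hypA a b n := by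
  have h1 : 0 < (ascPochhammer ℝ n).eval (a + b) := ascPochhammer_pos n _ (by linarith)
  have h2 : (0:ℝ) < n.factorial := by exact_mod_cast n.factorial_pos
  have h3 : (0:ℝ) < n + 1 := by positivity
  have h4 : (0:ℝ) < a + b + n := by positivity
  unfold hypA
  simp only [ascPochhammer_succ_eval, Nat.factorial_succ]
  push_cast
  field_simp
  ring

lemma hypA_bound (a b : ℝ) (ha : 1 ≤ a) (hb : 1 ≤ b) (he : (a - 1) * (b - 1) ≤ 1) (n : ℕ) :
    0 ≤ hypA a b n ∧ hypA a b n ≤ 1 := by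
  induction n with
  | zero => simp [hypA]
  | succ n ih =>
    have hr := hypA_rec a b ha hb n
    have hn : (0:ℝ) ≤ n := n.cast_nonneg
    have hp : 0 < ((n:ℝ) + 1) * (n + (a + b)) := by positivity
    constructor
    · by_contra hcon
      push Not at hcon
      have h1 := mul_neg_of_pos_of_neg hp hcon
      have h2 : 0 ≤ (a + n) * (b + n) * hypA a b n := mul_nonneg (by positivity) ih.1
      linarith
    · have h2 : (a + n) * (b + n) * hypA a b n ≤ (a + n) * (b + n) * 1 :=
        mul_le_mul_of_nonneg_left ih.2 (by positivity)
      by_contra hcon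
      push Not at hcon
      have h1 := mul_lt_mul_of_pos_left hcon hp
      nlinarith

lemma HasSum.congr_fun' {f g : ℕ → ℂ} {s : ℂ} (h : HasSum f s) (hfg : ∀ n, f n = g n) : HasSum g s := by
  rwa [← funext hfg]

lemma final_thm (a b : ℝ) (ha : 1 ≤ a) (hb : 1 ≤ b) (h3 : (a + b - 2) + 5 * ((a - 1) * (b - 1)) ≤ 3) :
    Set.InjOn (fun z : ℂ => z * hyperF a b (a + b) z) (Metric.ball (0 : ℂ) 1) ∧
    Convex ℝ ((fun z : ℂ => z * hyperF a b (a + b) z) '' Metric.ball (0 : ℂ) 1) := by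
  have he0 : 0 ≤ (a - 1) * (b - 1) := mul_nonneg (by linarith) (by linarith)
  have hbd := hypA_bound a b ha hb (by linarith)
  have hrec := hypA_rec a b ha hb
  have hFdef : ∀ z, hyperF a b (a + b) z = ∑' n, (hypA a b n : ℂ) * z ^ n := fun z => rfl
  have hA0' : hypA a b 0 = 1 := by simp [hypA]
  generalize hypA a b = A at *
  have hA : ∀ n, ‖(A n : ℂ)‖ ≤ n + 1 := by
    intro n
    rw [norm_real, Real.norm_eq_abs, abs_of_nonneg (hbd n).1]
    linarith [(hbd n).2, (n.cast_nonneg : (0:ℝ) ≤ n)]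
  have hA1 : ∀ n : ℕ, ‖((n:ℂ) + 1) * (A n : ℂ)‖ ≤ n + 1 := by
    intro n
    have : ‖((n:ℂ) + 1)‖ = n + 1 := by exact_mod_cast Complex.norm_natCast (n + 1)
    rw [norm_mul, norm_real, Real.norm_eq_abs, abs_of_nonneg (hbd n).1, this]
    exact mul_le_of_le_one_right (by positivity) (hbd n).2
  have hFeq : hyperF a b (a + b) = fun z => ∑' n, (A n : ℂ) * z ^ n := funext hFdef
  rw [hFeq]
  obtain ⟨F, hF⟩ : ∃ F : ℂ → ℂ, F = fun z => ∑' n, (A n : ℂ) * z ^ n := ⟨_, rfl⟩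
  obtain ⟨F', hF'⟩ : ∃ F' : ℂ → ℂ, F' = fun z => ∑' n : ℕ, ((n:ℂ) + 1) * (A (n + 1) : ℂ) * z ^ n := ⟨_, rfl⟩
  obtain ⟨f1, hf1⟩ : ∃ f1 : ℂ → ℂ, f1 = fun z => ∑' n : ℕ, (((n:ℂ) + 1) * (A n : ℂ)) * z ^ n := ⟨_, rfl⟩
  obtain ⟨f2, hf2⟩ : ∃ f2 : ℂ → ℂ, f2 = fun z => ∑' n : ℕ, ((n:ℂ) + 1) * (((n + 1 : ℕ):ℂ) + 1) * (A (n + 1) : ℂ) * z ^ n := ⟨_, rfl⟩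
  have hA0 : A 0 = 1 := hA0'
  have dF : ∀ z ∈ ball (0:ℂ) 1, HasDerivAt F (F' z) z := by
    intro z hz
    rw [hF, hF']
    exact (ps_deriv (fun n => (A n : ℂ)) hA z hz).2
  have df1 : ∀ z ∈ ball (0:ℂ) 1, HasDerivAt f1 (f2 z) z := by
    intro z hz
    rw [hf1, hf2]
    have := (ps_deriv (fun n : ℕ => ((n:ℂ) + 1) * (A n : ℂ)) hA1 z hz).2
    simpa only [mul_assoc] using this
  have sF : ∀ z ∈ ball (0:ℂ) 1, HasSum (fun n => (A n : ℂ) * z ^ n) (F z) := by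
    intro z hz
    rw [hF]
    exact (ps_summable _ hA z hz).hasSum
  have sF' : ∀ z ∈ ball (0:ℂ) 1, HasSum (fun n : ℕ => (n:ℂ) * (A n : ℂ) * z ^ n) (z * F' z) := by
    intro z hz
    have h1 := ((ps_deriv (fun n => (A n : ℂ)) hA z hz).1.hasSum).mul_left z
    have h2 := (hasSum_nat_add_iff (f := fun n : ℕ => (n:ℂ) * (A n : ℂ) * z ^ n) 1).1 (h1.congr_fun' (by
      intro n; push_cast; ring))
    rw [hF']
    simpa using h2
  have sf1 : ∀ z ∈ ball (0:ℂ) 1, HasSum (fun n : ℕ => (((n:ℂ) + 1) * (A n : ℂ)) * z ^ n) (f1 z) := by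
    intro z hz
    rw [hf1]
    exact (ps_summable _ hA1 z hz).hasSum
  have sf2 : ∀ z ∈ ball (0:ℂ) 1, HasSum (fun n : ℕ => (n:ℂ) * ((n:ℂ) + 1) * (A n : ℂ) * z ^ n) (z * f2 z) := by
    intro z hz
    have h1 := ((ps_deriv (fun n : ℕ => ((n:ℂ) + 1) * (A n : ℂ)) hA1 z hz).1.hasSum).mul_left z
    have h2 := (hasSum_nat_add_iff (f := fun n : ℕ => (n:ℂ) * ((n:ℂ) + 1) * (A n : ℂ) * z ^ n) 1).1 (h1.congr_fun' (by
      intro n; push_cast; ring))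
    rw [hf2]
    simpa [mul_assoc] using h2
  have hf1F : ∀ z ∈ ball (0:ℂ) 1, f1 z = F z + z * F' z := by
    intro z hz
    refine (sf1 z hz).unique (((sF z hz).add (sF' z hz)).congr_fun' ?_)
    intro n; ring
  have hode : ∀ z ∈ ball (0:ℂ) 1, z * f2 z + ((a + b - 2 : ℝ) : ℂ) * (f1 z - F z) =
      z * (z * f2 z + (((a + b - 2 : ℝ) : ℂ) + 1) * f1 z + (((a - 1) * (b - 1) : ℝ) : ℂ) * F z) := by
    intro z hz
    have hL := (sf2 z hz).add (((sf1 z hz).sub (sF z hz)).mul_left ((a + b - 2 : ℝ) : ℂ))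
    have hR := (((sf2 z hz).add ((sf1 z hz).mul_left (((a + b - 2 : ℝ) : ℂ) + 1))).add
      ((sF z hz).mul_left (((a - 1) * (b - 1) : ℝ) : ℂ))).mul_left z
    have hL' := (hasSum_nat_add_iff' 1).2 hL
    simp only [Finset.range_one, Finset.sum_singleton, Nat.cast_zero, zero_mul, zero_add, one_mul,
      sub_self, mul_zero, sub_zero] at hL'
    refine hL'.unique (hR.congr_fun' ?_)
    intro n
    have hr : (((n:ℝ) + 1) * (n + (a + b)) * A (n + 1) : ℂ) = (a + n) * (b + n) * A n := by
      exact_mod_cast hrec n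
    push_cast
    linear_combination (-z ^ (n + 1)) * hr
  have hF0 : F 0 = 1 := by
    have := (sF 0 (by simp)).unique (hasSum_single 0 (by intro n hn; simp [hn]))
    simpa [hA0] using this
  have hW := reW_pos (a + b - 2) ((a - 1) * (b - 1)) (by linarith) he0
    (by nlinarith [sq_nonneg (a - b)]) h3 F F' f1 f2 dF hf1F df1 hode hF0
  have df : ∀ z ∈ ball (0:ℂ) 1, HasDerivAt (fun z => z * F z) (f1 z) z := by
    intro z hz
    have := (hasDerivAt_id z).mul (dF z hz)
    rw [hf1F z hz]
    convert! this using 1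
    simp
  have hinj := inj_of_convex (fun z => z * F z) f1 f2 df df1 (fun z hz => (hW z hz).1) (fun z hz => (hW z hz).2)
  have hconv := image_convex (fun z => z * F z) f1 f2 1 df df1 (fun z hz => (hW z hz).1) (fun z hz => (hW z hz).2) hinj
  rw [hF] at hinj hconv
  exact ⟨hinj, hconv⟩

end helpers

theorem stmt_2 (a b : ℝ)
    (h : (a = 1 ∧ 1 ≤ b ∧ b ≤ 4) ∨
         (1 < a ∧ a ≤ b ∧ b ≤ 3 ∧ b ≤ 1 + a ∧ b ≤ 4 * a / (5 * a - 4))) :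
    Set.InjOn (fun z : ℂ => z * hyperF a b (a + b) z) (Metric.ball (0 : ℂ) 1) ∧
    Convex ℝ ((fun z : ℂ => z * hyperF a b (a + b) z) '' Metric.ball (0 : ℂ) 1) := by
  rcases h with ⟨rfl, h1, h2⟩ | ⟨h1, h2, h3, h4, h5⟩
  · exact final_thm 1 b le_rfl h1 (by nlinarith)
  · refine final_thm a b h1.le (by linarith) ?_
    rw [le_div_iff₀ (by linarith)] at h5
    nlinarith
end

section
/- Let a and b be real constants such that either (1) a = 1 and 1 ≤ b ≤ 4, or (2) 1 < a ≤ b and b ≤ 3 and b ≤ 1 + a and b ≤ 4a/(5a − 4). Then for every z ∈ 𝔻, |Im(z F(a,b;a+b;z))| ≤ π/(2 B(a,b)); that is, z ↦ z F(a,b;a+b;z) maps 𝔻 into the horizontal strip bounded by the lines Im w = ±π/(2B(a,b)). -/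
open Complex Filter MeasureTheory Metric Set

/-- Nonnegative, nonincreasing, convex sequences. -/
def NDC (u : ℕ → ℝ) : Prop :=
  ∀ n, 0 ≤ u n ∧ u (n + 1) ≤ u n ∧ 0 ≤ u n - 2 * u (n + 1) + u (n + 2)

lemma NDC.mul {u v : ℕ → ℝ} (hu : NDC u) (hv : NDC v) : NDC (fun n => u n * v n) := by
  intro n
  obtain ⟨h1, h2, h3⟩ := hu n
  obtain ⟨k1, k2, k3⟩ := hv n
  obtain ⟨h4, h5, _⟩ := hu (n + 1)
  obtain ⟨k4, k5, _⟩ := hv (n + 1)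
  have h6 := (hu (n + 2)).1
  have k6 := (hv (n + 2)).1
  refine ⟨mul_nonneg h1 k1, mul_le_mul h2 k2 k4 h1, ?_⟩
  simp only [add_assoc] at *
  norm_num at *
  obtain ⟨x, hx⟩ : ∃ x, x = u (n + 2) := ⟨_, rfl⟩
  obtain ⟨y, hy⟩ : ∃ y, y = v (n + 2) := ⟨_, rfl⟩
  obtain ⟨α, hα⟩ : ∃ x, x = u (n + 1) - u (n + 2) := ⟨_, rfl⟩
  obtain ⟨A, hA⟩ : ∃ x, x = v (n + 1) - v (n + 2) := ⟨_, rfl⟩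
  obtain ⟨β, hβ⟩ : ∃ x, x = u n - u (n + 1) - (u (n + 1) - u (n + 2)) := ⟨_, rfl⟩
  obtain ⟨B, hB⟩ : ∃ x, x = v n - v (n + 1) - (v (n + 1) - v (n + 2)) := ⟨_, rfl⟩
  have e1 : u (n + 1) = x + α := by linarith
  have e2 : u n = x + 2 * α + β := by linarith
  have e3 : v (n + 1) = y + A := by linarith
  have e4 : v n = y + 2 * A + B := by linarith
  have hx0 : 0 ≤ x := by linarith
  have hy0 : 0 ≤ y := by linarith
  have hα0 : 0 ≤ α := by linarith
  have hA0 : 0 ≤ A := by linarith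
  have hβ0 : 0 ≤ β := by linarith
  have hB0 : 0 ≤ B := by linarith
  rw [e1, e2, e3, e4, ← hx, ← hy]
  have : (x + 2 * α + β) * (y + 2 * A + B) - 2 * ((x + α) * (y + A)) + x * y
      = x * B + y * β + 2 * (α * A) + 2 * (α * B) + 2 * (β * A) + β * B := by ring
  rw [this]
  positivity

lemma ndc_pow {r : ℝ} (h0 : 0 ≤ r) (h1 : r ≤ 1) : NDC (fun n => r ^ (n + 1)) := by
  intro n
  have hp : 0 ≤ r ^ n := by positivity
  refine ⟨by positivity, pow_le_pow_of_le_one h0 h1 (by omega), ?_⟩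
  have : r ^ (n + 1) - 2 * r ^ (n + 1 + 1) + r ^ (n + 2 + 1) = r ^ n * r * (1 - r) ^ 2 := by ring
  simp only [this]
  positivity

lemma ndc_inv : NDC (fun n => 1 / ((n : ℝ) + 1)) := by
  intro n
  refine ⟨by positivity, ?_, ?_⟩
  · push_cast
    apply one_div_le_one_div_of_le <;> [positivity; linarith]
  · push_cast
    have : 1 / ((n : ℝ) + 1) - 2 * (1 / ((n : ℝ) + 1 + 1)) + 1 / ((n : ℝ) + 2 + 1)
      = 2 / (((n : ℝ) + 1) * (n + 2) * (n + 3)) := by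
      have h1 : (n : ℝ) + 1 ≠ 0 := by positivity
      have h2 : (n : ℝ) + 2 ≠ 0 := by positivity
      have h3 : (n : ℝ) + 3 ≠ 0 := by positivity
      rw [show (n : ℝ) + 1 + 1 = n + 2 by ring, show (n : ℝ) + 2 + 1 = n + 3 by ring]
      field_simp
      ring
    rw [this]
    positivity

noncomputable def sT (θ : ℝ) (N : ℕ) : ℝ := ∑ k ∈ Finset.range N, Real.sin (((k : ℝ) + 1) * θ)
noncomputable def sS (θ : ℝ) (N : ℕ) : ℝ := ∑ k ∈ Finset.range N, sT θ (k + 1)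

lemma sT_closed (θ : ℝ) (N : ℕ) : sT θ N * (2 - 2 * Real.cos θ) =
    Real.sin θ + Real.sin (N * θ) - Real.sin ((N + 1) * θ) := by
  induction N with
  | zero => simp [sT]
  | succ N ih =>
    have : sT θ (N + 1) = sT θ N + Real.sin (((N : ℝ) + 1) * θ) := by
      simp [sT, Finset.sum_range_succ]
    rw [this, add_mul, ih]
    push_cast
    have e1 : ((N : ℝ) + 1 + 1) * θ = ((N : ℝ) + 1) * θ + θ := by ring
    have e2 : (N : ℝ) * θ = ((N : ℝ) + 1) * θ - θ := by ring
    rw [e1, e2, Real.sin_add, Real.sin_sub]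
    ring

lemma sS_closed (θ : ℝ) (N : ℕ) : sS θ N * (2 - 2 * Real.cos θ) =
    (N + 1) * Real.sin θ - Real.sin ((N + 1) * θ) := by
  induction N with
  | zero => simp [sS]
  | succ N ih =>
    have : sS θ (N + 1) = sS θ N + sT θ (N + 1) := by
      simp [sS, Finset.sum_range_succ]
    rw [this, add_mul, ih, sT_closed]
    push_cast
    ring

lemma abs_sin_nat_mul (θ : ℝ) (n : ℕ) : |Real.sin (n * θ)| ≤ n * |Real.sin θ| := by
  induction n with
  | zero => simp
  | succ n ih =>
    push_cast
    rw [add_mul, one_mul, Real.sin_add]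
    refine (abs_add_le _ _).trans ?_
    rw [abs_mul, abs_mul]
    have h1 := Real.abs_cos_le_one θ
    have h2 := Real.abs_cos_le_one (n * θ)
    nlinarith [abs_nonneg (Real.sin (n * θ)), abs_nonneg (Real.sin θ)]

lemma sS_nonneg (θ : ℝ) (h : 0 ≤ Real.sin θ) (N : ℕ) : 0 ≤ sS θ N := by
  have hc := Real.cos_le_one θ
  rcases hc.lt_or_eq with hlt | heq
  · have h1 := sS_closed θ N
    have h2 := abs_sin_nat_mul θ (N + 1)
    push_cast at h2
    rw [abs_of_nonneg h] at h2
    have h3 := (abs_le.1 h2).2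
    by_contra hneg
    push Not at hneg
    nlinarith
  · have hs : Real.sin θ = 0 := by
      have := Real.sin_sq_add_cos_sq θ
      rw [heq] at this
      nlinarith
    have hz : ∀ n : ℕ, Real.sin (n * θ) = 0 := by
      intro n
      have := abs_sin_nat_mul θ n
      rw [hs] at this
      simpa using this
    have : ∀ k, sT θ k = 0 := by
      intro k
      apply Finset.sum_eq_zero
      intro i _
      have := hz (i + 1)
      push_cast at this
      exact this
    simp [sS, this]

lemma sum_by_parts (v : ℕ → ℝ) (θ : ℝ) (N : ℕ) :
    ∑ n ∈ Finset.range N, v n * Real.sin (((n : ℝ) + 1) * θ) =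
      ∑ n ∈ Finset.range N, (v n - 2 * v (n + 1) + v (n + 2)) * sS θ (n + 1)
        + (v N - v (N + 1)) * sS θ N + v N * sT θ N := by
  induction N with
  | zero => simp [sS, sT]
  | succ N ih =>
    have h1 : sT θ (N + 1) = sT θ N + Real.sin (((N : ℝ) + 1) * θ) := by
      simp [sT, Finset.sum_range_succ]
    have h2 : sS θ (N + 1) = sS θ N + sT θ (N + 1) := by
      simp [sS, Finset.sum_range_succ]
    rw [Finset.sum_range_succ, Finset.sum_range_succ, ih, h2, h1]
    ring

lemma abs_sT_le (θ : ℝ) (N : ℕ) : |sT θ N| ≤ N := by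
  refine (Finset.abs_sum_le_sum_abs _ _).trans ?_
  refine (Finset.sum_le_sum (fun i _ => Real.abs_sin_le_one _)).trans ?_
  simp

lemma NDC.le_zero {u : ℕ → ℝ} (hu : NDC u) (n : ℕ) : u n ≤ u 0 := by
  induction n with
  | zero => exact le_rfl
  | succ n ih => exact (hu n).2.1.trans ih

lemma NDC.summable {u : ℕ → ℝ} (hu : NDC u) {z : ℂ} (hz : ‖z‖ < 1) :
    Summable (fun n => (u n : ℂ) * z ^ (n + 1)) := by
  refine Summable.of_norm_bounded (g := fun n => u 0 * ‖z‖ ^ n)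
    ((summable_geometric_of_lt_one (norm_nonneg z) hz).mul_left _) ?_
  intro n
  rw [norm_mul, norm_pow, Complex.norm_real, Real.norm_eq_abs, abs_of_nonneg (hu n).1]
  apply mul_le_mul (hu.le_zero n) _ (by positivity) (hu 0).1
  exact pow_le_pow_of_le_one (norm_nonneg z) hz.le (by omega)

lemma NDC.im_nonneg {u : ℕ → ℝ} (hu : NDC u) {z : ℂ} (hz : ‖z‖ < 1) (hi : 0 ≤ z.im) {f : ℂ}
    (hf : HasSum (fun n => (u n : ℂ) * z ^ (n + 1)) f) : 0 ≤ f.im := by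
  set r := ‖z‖ with hr
  set θ := Complex.arg z with hθ
  have hr0 : 0 ≤ r := norm_nonneg z
  have hs : 0 ≤ Real.sin θ := by
    apply Real.sin_nonneg_of_nonneg_of_le_pi
    · exact Complex.arg_nonneg_iff.2 hi
    · exact Complex.arg_le_pi z
  have hv : NDC (fun n => u n * r ^ (n + 1)) := hu.mul (ndc_pow hr0 hz.le)
  have him : ∀ n : ℕ, ((u n : ℂ) * z ^ (n + 1)).im =
      u n * r ^ (n + 1) * Real.sin (((n : ℝ) + 1) * θ) := by
    intro n
    have h1 : z ^ (n + 1) = ((r ^ (n + 1) : ℝ) : ℂ) *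
        Complex.exp (((((n : ℝ) + 1) * θ : ℝ) : ℂ) * Complex.I) := by
      conv_lhs => rw [← Complex.norm_mul_exp_arg_mul_I z, mul_pow, ← Complex.exp_nat_mul]
      push_cast
      congr 2
      ring
    rw [h1, ← mul_assoc, ← Complex.ofReal_mul, Complex.im_ofReal_mul, Complex.exp_ofReal_mul_I_im]
  have h2 : HasSum (fun n : ℕ => u n * r ^ (n + 1) * Real.sin (((n : ℝ) + 1) * θ)) f.im := by
    have := Complex.hasSum_im hf
    simpa only [him] using this
  have h3 := h2.tendsto_sum_nat
  have h4 : Tendsto (fun N : ℕ => -(u 0 * r * ((N : ℝ) * r ^ N))) atTop (nhds 0) := by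
    have := (tendsto_self_mul_const_pow_of_lt_one hr0 hz).const_mul (u 0 * r)
    simpa using this.neg
  refine le_of_tendsto_of_tendsto' h4 h3 ?_
  intro N
  have := sum_by_parts (fun n => u n * r ^ (n + 1)) θ N
  rw [this]
  have p1 : 0 ≤ ∑ n ∈ Finset.range N, (u n * r ^ (n + 1) - 2 * (u (n + 1) * r ^ (n + 1 + 1))
      + u (n + 2) * r ^ (n + 2 + 1)) * sS θ (n + 1) :=
    Finset.sum_nonneg fun i _ => mul_nonneg (hv i).2.2 (sS_nonneg θ hs _)
  have p2 : 0 ≤ (u N * r ^ (N + 1) - u (N + 1) * r ^ (N + 1 + 1)) * sS θ N :=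
    mul_nonneg (sub_nonneg.2 (hv N).2.1) (sS_nonneg θ hs _)
  have p3 : -(u 0 * r * ((N : ℝ) * r ^ N)) ≤ u N * r ^ (N + 1) * sT θ N := by
    have q1 : |u N * r ^ (N + 1) * sT θ N| ≤ u 0 * r ^ (N + 1) * N := by
      rw [abs_mul, abs_of_nonneg (hv N).1]
      exact mul_le_mul (mul_le_mul_of_nonneg_right (hu.le_zero N) (by positivity))
        (abs_sT_le θ N) (abs_nonneg _) (mul_nonneg (hu 0).1 (by positivity))
    have q2 := (abs_le.1 q1).1
    have q3 : u 0 * r ^ (N + 1) * N = u 0 * r * ((N : ℝ) * r ^ N) := by ring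
    linarith
  linarith

/-- Coefficients. -/
noncomputable def cf (a b : ℝ) (n : ℕ) : ℝ :=
  (ascPochhammer ℝ n).eval a * (ascPochhammer ℝ n).eval b /
      ((ascPochhammer ℝ n).eval (a + b) * (n.factorial : ℝ))

lemma cf_pos {a b : ℝ} (ha : 1 ≤ a) (hb : 1 ≤ b) (n : ℕ) : 0 < cf a b n := by
  have h1 := ascPochhammer_pos n a (by linarith)
  have h2 := ascPochhammer_pos n b (by linarith)
  have h3 := ascPochhammer_pos n (a + b) (by linarith)
  unfold cf
  positivity

lemma cf_succ {a b : ℝ} (ha : 1 ≤ a) (hb : 1 ≤ b) (n : ℕ) :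
    cf a b (n + 1) = cf a b n * ((a + n) * (b + n) / ((a + b + n) * (n + 1))) := by
  have h3 := ascPochhammer_pos n (a + b) (by linarith)
  have h4 : 0 < a + b + n := by positivity
  unfold cf
  rw [ascPochhammer_succ_eval, ascPochhammer_succ_eval, ascPochhammer_succ_eval,
    Nat.factorial_succ]
  push_cast
  field_simp

lemma cf_ndc {a b : ℝ} (ha : 1 ≤ a) (hb : 1 ≤ b) (h : 5 * (a * b) ≤ 4 * (a + b)) :
    NDC (cf a b) := by
  intro n
  have hc := cf_pos ha hb n
  have hn : (0 : ℝ) ≤ n := by positivity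
  have h4 : 0 < a + b + n := by positivity
  have h5 : 0 < a + b + n + 1 := by positivity
  have ht : a * b / 4 ≤ a + b - a * b := by linarith
  have hp : 1 ≤ a * b := by nlinarith
  refine ⟨hc.le, ?_, ?_⟩
  · rw [cf_succ ha hb]
    apply mul_le_of_le_one_right hc.le
    rw [div_le_one (by positivity)]
    nlinarith
  · rw [show n + 2 = n + 1 + 1 by ring, cf_succ ha hb (n + 1), cf_succ ha hb n]
    push_cast
    have e : cf a b n - 2 * (cf a b n * ((a + n) * (b + n) / ((a + b + n) * (n + 1)))) +
      cf a b n * ((a + n) * (b + n) / ((a + b + n) * (n + 1))) *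
        ((a + (n + 1)) * (b + (n + 1)) / ((a + b + (n + 1)) * (n + 1 + 1))) =
      cf a b n / ((a + b + n) * (n + 1) * (a + b + n + 1) * (n + 2)) *
       (2 * (n : ℝ) ^ 2 + n * (2 + 4 * (a + b - a * b)) +
        ((a + b - a * b) * (2 + (a + b) + (a + b - a * b)) - a * b)) := by
      have h6 : a + b + ((n : ℝ) + 1) ≠ 0 := by positivity
      have h7 : (n : ℝ) + 1 + 1 ≠ 0 := by positivity
      field_simp
      ring
    rw [e]
    have h8 : 0 ≤ (a + b - a * b) * (2 + (a + b) + (a + b - a * b)) - a * b := by nlinarith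
    have h9 : 0 ≤ 2 + 4 * (a + b - a * b) := by linarith
    positivity

lemma cf_tendsto {a b : ℝ} (ha : 1 ≤ a) (hb : 1 ≤ b) :
    Tendsto (fun n : ℕ => ((n : ℝ) + 1) * cf a b n) atTop
      (nhds (Real.Gamma (a + b) / (Real.Gamma a * Real.Gamma b))) := by
  rw [← tendsto_add_atTop_iff_nat 1]
  have gs : ∀ x : ℝ, ∀ n : ℕ, Real.GammaSeq x n =
      (n : ℝ) ^ x * n.factorial / (ascPochhammer ℝ (n + 1)).eval x := by
    intro x n
    have hprod : ∀ m : ℕ, (ascPochhammer ℝ m).eval x = ∏ j ∈ Finset.range m, (x + j) := by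
      intro m
      induction m with
      | zero => simp
      | succ m ih => rw [ascPochhammer_succ_eval, Finset.prod_range_succ, ih]
    rw [Real.GammaSeq, hprod]
  have h1 := (Real.GammaSeq_tendsto_Gamma (a + b)).div
    ((Real.GammaSeq_tendsto_Gamma a).mul (Real.GammaSeq_tendsto_Gamma b))
    (mul_pos (Real.Gamma_pos_of_pos (by linarith)) (Real.Gamma_pos_of_pos (by linarith))).ne'
  have h2 : Tendsto (fun n : ℕ => 1 + 1 / ((n : ℝ) + 1)) atTop (nhds (1 + 0)) :=
    tendsto_one_div_add_atTop_nhds_zero_nat.const_add 1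
  have h3 := h2.mul h1
  rw [add_zero, one_mul] at h3
  refine h3.congr' ?_
  filter_upwards [eventually_gt_atTop 0] with n hn
  have hn' : (0 : ℝ) < n := by exact_mod_cast hn
  simp only [Pi.div_apply, gs]
  have p1 := ascPochhammer_pos (n + 1) a (by linarith)
  have p2 := ascPochhammer_pos (n + 1) b (by linarith)
  have p3 := ascPochhammer_pos (n + 1) (a + b) (by linarith)
  have q1 : (0 : ℝ) < (n : ℝ) ^ a := Real.rpow_pos_of_pos hn' _
  have q2 : (0 : ℝ) < (n : ℝ) ^ b := Real.rpow_pos_of_pos hn' _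
  have q3 : (0 : ℝ) < n.factorial := by positivity
  rw [cf, Real.rpow_add hn', Nat.factorial_succ]
  push_cast
  field_simp

lemma gam_succ {a b : ℝ} (ha : 1 ≤ a) (hb : 1 ≤ b) (n : ℕ) :
    ((n : ℝ) + 1 + 1) * cf a b (n + 1) - ((n : ℝ) + 1) * cf a b n =
      cf a b n / ((a + b + n) * (n + 1)) *
        ((a * b - 1) * (n + 1) + (a - 1) * (b - 1)) := by
  have h4 : 0 < a + b + n := by positivity
  rw [cf_succ ha hb]
  field_simp
  ring

lemma d_ndc {a b : ℝ} (ha : 1 ≤ a) (hb : 1 ≤ b) (h : 5 * (a * b) ≤ 4 * (a + b)) :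
    NDC (fun n => Real.Gamma (a + b) / (Real.Gamma a * Real.Gamma b) -
      ((n : ℝ) + 1) * cf a b n) := by
  have hp : 1 ≤ a * b := by nlinarith
  have hw : 0 ≤ (a - 1) * (b - 1) := mul_nonneg (by linarith) (by linarith)
  have hp4 : a * b ≤ 4 := by nlinarith
  have mono : Monotone (fun n : ℕ => ((n : ℝ) + 1) * cf a b n) := by
    apply monotone_nat_of_le_succ
    intro n
    have := gam_succ ha hb n
    have hc := cf_pos ha hb n
    have h4 : 0 < a + b + n := by positivity
    have : 0 ≤ cf a b n / ((a + b + n) * (n + 1)) *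
        ((a * b - 1) * (n + 1) + (a - 1) * (b - 1)) := by
      have : 0 ≤ a * b - 1 := by linarith
      positivity
    push_cast
    linarith
  intro n
  have hc := cf_pos ha hb n
  have hn : (0 : ℝ) ≤ n := by positivity
  have h4 : 0 < a + b + n := by positivity
  refine ⟨sub_nonneg.2 (mono.ge_of_tendsto (cf_tendsto ha hb) n),
    sub_le_sub_left (mono (Nat.le_succ n)) _, ?_⟩
  have g1 := gam_succ ha hb n
  have g2 := gam_succ ha hb (n + 1)
  rw [cf_succ ha hb n] at g2
  have e : cf a b n / ((a + b + n) * (n + 1)) * ((a * b - 1) * (n + 1) + (a - 1) * (b - 1)) -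
     cf a b n * ((a + n) * (b + n) / ((a + b + n) * (n + 1))) /
      ((a + b + (n + 1)) * (n + 1 + 1)) *
        ((a * b - 1) * (n + 1 + 1) + (a - 1) * (b - 1)) =
     cf a b n / ((a + b + n) * (n + 1) * (a + b + n + 1) * (n + 2)) *
      (2 * (a * b - 1) * ((n : ℝ) + 1) ^ 2 + (n + 1) * ((a - 1) * (b - 1) * (4 - a * b)
        + 2 * (a * b - 1)) + (a - 1) * (b - 1) * (2 * (a + b - a * b))) := by
    have h6 : a + b + ((n : ℝ) + 1) ≠ 0 := by positivity
    have h7 : (n : ℝ) + 1 + 1 ≠ 0 := by positivity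
    field_simp
    ring
  have pos : 0 ≤ cf a b n / ((a + b + n) * (n + 1) * (a + b + n + 1) * (n + 2)) *
      (2 * (a * b - 1) * ((n : ℝ) + 1) ^ 2 + (n + 1) * ((a - 1) * (b - 1) * (4 - a * b)
        + 2 * (a * b - 1)) + (a - 1) * (b - 1) * (2 * (a + b - a * b))) := by
    have i1 : 0 ≤ a * b - 1 := by linarith
    have i2 : 0 ≤ 4 - a * b := by linarith
    have i3 : 0 ≤ a + b - a * b := by linarith
    positivity
  push_cast at g2 ⊢
  rw [cf_succ ha hb n] at *
  rw [show n + 2 = n + 1 + 1 by ring]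
  rw [show (n : ℝ) + 2 + 1 = n + 1 + 1 + 1 by ring]
  linarith

lemma upper_half {a b : ℝ} (ha : 1 ≤ a) (hb : 1 ≤ b) (h : 5 * (a * b) ≤ 4 * (a + b))
    {z : ℂ} (hz : ‖z‖ < 1) (hi : 0 ≤ z.im) :
    |(z * hyperF a b (a + b) z).im| ≤
      Real.pi / 2 * (Real.Gamma (a + b) / (Real.Gamma a * Real.Gamma b)) := by
  set L := Real.Gamma (a + b) / (Real.Gamma a * Real.Gamma b) with hL
  have hL0 : 0 ≤ L := by
    have h1 := Real.Gamma_pos_of_pos (show 0 < a by linarith)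
    have h2 := Real.Gamma_pos_of_pos (show 0 < b by linarith)
    have h3 := Real.Gamma_pos_of_pos (show 0 < a + b by linarith)
    positivity
  have hc := cf_ndc ha hb h
  have hf : HasSum (fun n => (cf a b n : ℂ) * z ^ (n + 1)) (z * hyperF a b (a + b) z) := by
    have h1 := (hc.summable hz).hasSum
    have h2 : z * hyperF a b (a + b) z = ∑' n, (cf a b n : ℂ) * z ^ (n + 1) := by
      rw [hyperF, ← tsum_mul_left]
      congr 1
      ext n
      rw [cf]
      ring
    rwa [h2]
  have lower := hc.im_nonneg hz hi hf
  have hlog : HasSum (fun n : ℕ => z ^ (n + 1) / ((n : ℂ) + 1)) (-Complex.log (1 - z)) := by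
    have h1 := Complex.hasSum_taylorSeries_neg_log hz
    rw [← hasSum_nat_add_iff' 1] at h1
    simpa using h1
  have hd := (d_ndc ha hb h).mul ndc_inv
  have hsum : HasSum (fun n : ℕ => (((L - ((n : ℝ) + 1) * cf a b n) * (1 / ((n : ℝ) + 1)) : ℝ) : ℂ)
      * z ^ (n + 1)) (L * (-Complex.log (1 - z)) - z * hyperF a b (a + b) z) := by
    refine ((hlog.mul_left (L : ℂ)).sub hf).congr_fun ?_
    intro n
    have : (n : ℂ) + 1 ≠ 0 := by exact_mod_cast (Nat.succ_ne_zero n)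
    push_cast
    field_simp
  have up := hd.im_nonneg hz hi hsum
  rw [Complex.sub_im, Complex.im_ofReal_mul, Complex.neg_im, Complex.log_im] at up
  have harg : |Complex.arg (1 - z)| ≤ Real.pi / 2 := by
    rw [Complex.abs_arg_le_pi_div_two_iff]
    have := (Complex.abs_re_le_norm z).trans hz.le
    have := (abs_le.1 this).2
    simpa using this
  have := (abs_le.1 harg).1
  rw [abs_of_nonneg lower]
  nlinarith

theorem stmt_3 (a b : ℝ)
    (h : (a = 1 ∧ 1 ≤ b ∧ b ≤ 4) ∨
         (1 < a ∧ a ≤ b ∧ b ≤ 3 ∧ b ≤ 1 + a ∧ b ≤ 4 * a / (5 * a - 4))) :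
    ∀ z ∈ Metric.ball (0 : ℂ) 1,
      |(z * hyperF a b (a + b) z).im| ≤
        Real.pi / (2 * (Real.Gamma a * Real.Gamma b / Real.Gamma (a + b))) := by
  intro z hz
  have hz' : ‖z‖ < 1 := by simpa using hz
  have key : 1 ≤ a ∧ 1 ≤ b ∧ 5 * (a * b) ≤ 4 * (a + b) := by
    rcases h with ⟨h1, h2, h3⟩ | ⟨h1, h2, h3, h4, h5⟩
    · subst h1
      exact ⟨le_rfl, h2, by linarith⟩
    · refine ⟨h1.le, by linarith, ?_⟩
      rw [le_div_iff₀ (by linarith)] at h5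
      linarith
  obtain ⟨ha, hb, hab⟩ := key
  have e : Real.pi / (2 * (Real.Gamma a * Real.Gamma b / Real.Gamma (a + b))) =
      Real.pi / 2 * (Real.Gamma (a + b) / (Real.Gamma a * Real.Gamma b)) := by
    rw [← div_div, div_div_eq_mul_div, mul_div_assoc]
  rw [e]
  rcases le_total 0 z.im with hi | hi
  · exact upper_half ha hb hab hz' hi
  · have h1 := upper_half ha hb hab (z := (starRingEnd ℂ) z) (by simpa using hz') (by simpa using hi)
    have h2 : (starRingEnd ℂ) z * hyperF a b (a + b) ((starRingEnd ℂ) z) =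
        (starRingEnd ℂ) (z * hyperF a b (a + b) z) := by
      rw [map_mul, hyperF, hyperF, Complex.conj_tsum]
      congr 2
      ext n
      rw [map_mul, map_pow, Complex.conj_ofReal]
    rw [h2, Complex.conj_im, abs_neg] at h1
    exact h1
end

section
/- Let a, b, c be real constants with −1 ≤ a ≤ c, 0 ≤ b ≤ c and c ≠ 0. Then there exists a Borel probability measure μ on [0,1] such that for all z ∈ 𝔻: F(a+1,b+1;c+1;z) = F(a+1,b;c;z) · ∫₀¹ 1/(1 − tz) dμ(t). -/
open Complex Filter MeasureTheory Metric Set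

/-- Truncated symmetric Jacobi matrix with zero diagonal and off-diagonal entries `r`. -/
def jac (r : ℕ → ℝ) (M : ℕ) : Matrix (Fin M) (Fin M) ℝ :=
  Matrix.of fun i j => (if (j : ℕ) = i + 1 then r i else 0) + (if (i : ℕ) = j + 1 then r j else 0)

lemma jac_herm (r : ℕ → ℝ) (M : ℕ) : (jac r M).IsHermitian := by
  ext i j
  simp [jac, add_comm]

lemma jac_mulVec (r : ℕ → ℝ) (M : ℕ) (x : ℕ → ℝ) (hx : x M = 0) (i : Fin M) :
    (jac r M).mulVec (fun j => x j) i =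
      r i * x (i + 1) + (if (i : ℕ) = 0 then 0 else r (i - 1) * x (i - 1)) := by
  have h : (jac r M).mulVec (fun j => x j) i = ∑ j ∈ Finset.range M,
      ((if j = (i : ℕ) + 1 then r i else 0) + (if (i : ℕ) = j + 1 then r j else 0)) * x j := by
    rw [← Fin.sum_univ_eq_sum_range
      (fun j => ((if j = (i : ℕ) + 1 then r i else 0) + (if (i : ℕ) = j + 1 then r j else 0)) * x j)]
    rfl
  rw [h]
  simp only [add_mul, Finset.sum_add_distrib, ite_mul, zero_mul]
  congr 1
  · rw [Finset.sum_ite_eq']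
    split_ifs with h1
    · rfl
    · have : (i : ℕ) + 1 = M := by
        have := i.2
        simp at h1
        omega
      rw [this, hx, mul_zero]
  · obtain ⟨i, hi⟩ := i
    cases i with
    | zero => simp
    | succ n =>
      simp only [Nat.add_right_cancel_iff, Finset.sum_ite_eq]
      rw [if_pos (by simp; omega)]
      simp

lemma jac_form (g r : ℕ → ℝ) (hg0 : ∀ n, 0 ≤ g n) (hg1 : ∀ n, g n ≤ 1)
    (hr : ∀ n, r n = √((1 - g n) * g (n + 1))) (M : ℕ) (x : ℕ → ℝ) (hx : x M = 0) :
    |∑ i : Fin M, x i * (jac r M).mulVec (fun j => x j) i| ≤ ∑ i : Fin M, x i ^ 2 := by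
  have h1 : ∑ i : Fin M, x i * (jac r M).mulVec (fun j => x j) i =
      ∑ n ∈ Finset.range M, 2 * (r n * x n * x (n + 1)) := by
    simp only [jac_mulVec r M x hx]
    rw [Fin.sum_univ_eq_sum_range (fun i => x i * (r i * x (i + 1) +
      (if (i : ℕ) = 0 then 0 else r (i - 1) * x (i - 1))))]
    simp only [mul_add, two_mul, Finset.sum_add_distrib]
    congr 1
    · exact Finset.sum_congr rfl fun n _ => by ring
    · cases M with
      | zero => simp
      | succ m =>
        rw [Finset.sum_range_succ', Finset.sum_range_succ _ m]
        simp only [hx]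
        simp
        exact Finset.sum_congr rfl fun n _ => by ring
  rw [h1, Fin.sum_univ_eq_sum_range (fun i => x i ^ 2)]
  have h2 : ∀ n, |2 * (r n * x n * x (n + 1))| ≤ (1 - g n) * x n ^ 2 + g (n + 1) * x (n + 1) ^ 2 := by
    intro n
    have e1 : 0 ≤ 1 - g n := by linarith [hg1 n]
    have e2 := hg0 (n + 1)
    have s1 := Real.sq_sqrt e1
    have s2 := Real.sq_sqrt e2
    rw [hr, Real.sqrt_mul e1]
    set p := √(1 - g n)
    set q := √(g (n + 1))
    rw [← s1, ← s2, abs_le]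
    constructor
    · nlinarith [sq_nonneg (p * x n + q * x (n + 1))]
    · nlinarith [sq_nonneg (p * x n - q * x (n + 1))]
  refine (Finset.abs_sum_le_sum_abs _ _).trans ((Finset.sum_le_sum fun n _ => h2 n).trans ?_)
  rw [Finset.sum_add_distrib]
  have h3 : ∑ n ∈ Finset.range M, g (n + 1) * x (n + 1) ^ 2 ≤ ∑ n ∈ Finset.range M, g n * x n ^ 2 := by
    have := Finset.sum_range_succ' (fun n => g n * x n ^ 2) M
    rw [Finset.sum_range_succ, hx] at this
    have := mul_nonneg (hg0 0) (sq_nonneg (x 0))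
    linarith
  have h4 : ∑ n ∈ Finset.range M, (1 - g n) * x n ^ 2 =
      ∑ n ∈ Finset.range M, x n ^ 2 - ∑ n ∈ Finset.range M, g n * x n ^ 2 := by
    rw [← Finset.sum_sub_distrib]
    exact Finset.sum_congr rfl fun n _ => by ring
  linarith

lemma jac_eig (g r : ℕ → ℝ) (hg0 : ∀ n, 0 ≤ g n) (hg1 : ∀ n, g n ≤ 1)
    (hr : ∀ n, r n = √((1 - g n) * g (n + 1))) (M : ℕ) (i : Fin M) :
    |(jac_herm r M).eigenvalues i| ≤ 1 := by
  set v := (jac_herm r M).eigenvectorBasis i with hv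
  have hn : ∑ j : Fin M, v j ^ 2 = 1 := by
    have := (jac_herm r M).eigenvectorBasis.orthonormal.1 i
    rw [EuclideanSpace.norm_eq] at this
    have h2 := (Real.sqrt_eq_one.1 this)
    simpa using h2
  have he := (jac_herm r M).mulVec_eigenvectorBasis i
  rw [← hv] at he
  let x : ℕ → ℝ := fun n => if h : n < M then v ⟨n, h⟩ else 0
  have hx : ∀ j : Fin M, x j = v j := fun j => by simp [x]
  have := jac_form g r hg0 hg1 hr M x (by simp [x])
  simp only [hx] at this
  rw [hn] at this
  have e : (jac r M).mulVec (fun j => v j) = (jac_herm r M).eigenvalues i • (v : Fin M → ℝ) := he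
  rw [e] at this
  convert! this using 2
  calc _ = (jac_herm r M).eigenvalues i * ∑ j : Fin M, v j ^ 2 := by rw [hn, mul_one]
    _ = _ := by
      rw [Finset.mul_sum]
      exact Finset.sum_congr rfl fun j _ => by simp; ring

lemma herm_pow {n : Type*} [Fintype n] [DecidableEq n] {A : Matrix n n ℝ} (hA : A.IsHermitian)
    (k : ℕ) (i : n) : (A ^ k) i i = ∑ j, (hA.eigenvectorBasis j i) ^ 2 * hA.eigenvalues j ^ k := by
  conv_lhs => rw [hA.spectral_theorem, ← map_pow, Matrix.diagonal_pow]
  rw [Unitary.conjStarAlgAut_apply, Matrix.mul_apply]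
  refine Finset.sum_congr rfl fun j _ => ?_
  rw [Matrix.mul_diagonal]
  simp [Matrix.star_apply]
  ring

lemma jac_measure (g r : ℕ → ℝ) (hg0 : ∀ n, 0 ≤ g n) (hg1 : ∀ n, g n ≤ 1)
    (hr : ∀ n, r n = √((1 - g n) * g (n + 1))) (M : ℕ) (i0 : Fin M) :
    ∃ μ : ProbabilityMeasure (Set.Icc (0 : ℝ) 1), ∀ k : ℕ,
      ∫ t, (t : ℝ) ^ k ∂(μ : Measure (Set.Icc (0 : ℝ) 1)) = ((jac r M) ^ (2 * k)) i0 i0 := by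
  set H := jac_herm r M
  let lam : Fin M → Set.Icc (0 : ℝ) 1 := fun j => ⟨H.eigenvalues j ^ 2, sq_nonneg _, by
    have := jac_eig g r hg0 hg1 hr M j
    exact (sq_le_one_iff_abs_le_one _).2 this⟩
  let p : Fin M → ℝ := fun j => (H.eigenvectorBasis j i0) ^ 2
  have hp : ∀ j, 0 ≤ p j := fun j => sq_nonneg _
  have hs : ∑ j, p j = 1 := by
    have := herm_pow H 0 i0
    simpa [p] using this.symm
  let μ : Measure (Set.Icc (0 : ℝ) 1) := ∑ j, ENNReal.ofReal (p j) • Measure.dirac (lam j)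
  have hμ : IsProbabilityMeasure μ := by
    constructor
    simp only [μ, Measure.coe_finsetSum, Finset.sum_apply, Measure.smul_apply, measure_univ,
      smul_eq_mul, mul_one]
    rw [← ENNReal.ofReal_sum_of_nonneg (fun j _ => hp j), hs, ENNReal.ofReal_one]
  refine ⟨⟨μ, hμ⟩, fun k => ?_⟩
  rw [herm_pow H]
  change ∫ t, (t : ℝ) ^ k ∂μ = _
  rw [integral_finsetSum_measure]
  · refine Finset.sum_congr rfl fun j _ => ?_
    rw [integral_smul_measure, integral_dirac, ENNReal.toReal_ofReal (hp j)]
    simp [lam, p, pow_mul]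
  · intro j _
    exact (integrable_dirac (by simp)).smul_measure (by simp)

/-- Coefficient vectors of the resolvent solution. -/
noncomputable def vv (r : ℕ → ℝ) (f : ℕ → ℕ → ℝ) (k n : ℕ) : ℝ :=
  if n ≤ k ∧ Even (k - n) then (∏ i ∈ Finset.range n, r i) * f (n + 1) ((k - n) / 2) else 0

/-- Coefficients of `F₀(w²)`. -/
noncomputable def ph (f : ℕ → ℕ → ℝ) (k : ℕ) : ℝ := if Even k then f 0 (k / 2) else 0

lemma vv_pos (r : ℕ → ℝ) (f : ℕ → ℕ → ℝ) (n l : ℕ) :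
    vv r f (n + 2 * l) n = (∏ i ∈ Finset.range n, r i) * f (n + 1) l := by
  simp [vv]

lemma vv_neg (r : ℕ → ℝ) (f : ℕ → ℕ → ℝ) (k n : ℕ) (h : ∀ l, k ≠ n + 2 * l) :
    vv r f k n = 0 := by
  rw [vv, if_neg]
  rintro ⟨h1, m, hm⟩
  exact h m (by omega)

lemma vv_rec (r : ℕ → ℝ) (f : ℕ → ℕ → ℝ) (hf0 : ∀ n, f n 0 = 1)
    (hf : ∀ n k, f (n + 1) (k + 1) = f n (k + 1) + r n ^ 2 * f (n + 2) k) (k n : ℕ) :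
    vv r f (k + 1) n = (r n * vv r f k (n + 1) + (if n = 0 then 0 else r (n - 1) * vv r f k (n - 1)))
      + ph f (k + 1) * (if n = 0 then 1 else 0) := by
  cases n with
  | zero =>
    simp only [if_true, mul_one, add_zero]
    rcases Nat.even_or_odd (k + 1) with he | ho
    · obtain ⟨l, hl⟩ : ∃ l, k = 1 + 2 * l := by
        obtain ⟨m, hm⟩ := he
        exact ⟨m - 1, by omega⟩
      subst hl
      rw [ph, if_pos he]
      have h1 := vv_pos r f 0 (l + 1)
      have h2 := vv_pos r f 1 l
      rw [show 1 + 2 * l + 1 = 0 + 2 * (l + 1) by ring, h1, zero_add, h2, hf]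
      rw [show (0 + 2 * (l + 1)) / 2 = l + 1 by omega]
      simp
      ring
    · have : ¬ Even (k + 1) := Nat.not_even_iff_odd.2 ho
      obtain ⟨m, hm⟩ := ho
      rw [ph, if_neg this, vv_neg r f (k + 1) 0 (by intro l; omega), vv_neg r f k _ (by intro l; omega)]
      simp
  | succ n =>
    simp only [Nat.add_eq_zero_iff, one_ne_zero, and_false, if_false, mul_zero, add_zero,
      Nat.add_sub_cancel]
    by_cases h : ∃ l, k = n + 2 * l
    · obtain ⟨l, rfl⟩ := h
      have h1 := vv_pos r f (n + 1) l
      rw [show n + 2 * l + 1 = n + 1 + 2 * l by ring, h1, vv_pos r f n l]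
      cases l with
      | zero =>
        rw [vv_neg r f _ _ (by intro l; omega), hf0, hf0, Finset.prod_range_succ]
        ring
      | succ l =>
        have h3 := vv_pos r f (n + 1 + 1) l
        rw [show n + 2 * (l + 1) = n + 1 + 1 + 2 * l by ring, h3, hf]
        simp only [Finset.prod_range_succ]
        ring
    · push Not at h
      rw [vv_neg r f (k + 1) _ (by intro l; have := h l; omega), vv_neg r f k n h,
        vv_neg r f k _ (by intro l; have := h (l + 1); omega)]
      simp

lemma vv_sum (r : ℕ → ℝ) (f : ℕ → ℕ → ℝ) (hf0 : ∀ n, f n 0 = 1)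
    (hf : ∀ n k, f (n + 1) (k + 1) = f n (k + 1) + r n ^ 2 * f (n + 2) k) (M : ℕ) (k : ℕ)
    (hk : k ≤ M) :
    (fun i : Fin (M + 1) => vv r f k i) = ∑ ij ∈ Finset.HasAntidiagonal.antidiagonal k,
      ph f ij.1 • ((jac r (M + 1)) ^ ij.2).mulVec (Pi.single 0 1) := by
  induction k with
  | zero =>
    ext i
    simp only [Finset.Nat.antidiagonal_zero, Finset.sum_singleton, pow_zero, Matrix.one_mulVec]
    obtain ⟨i, hi⟩ := i
    cases i with
    | zero => simp [vv, ph, hf0]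
    | succ n => simp [vv, Fin.ext_iff]
  | succ k ih =>
    rw [Finset.Nat.antidiagonal_succ']
    simp only [Finset.sum_cons, Finset.sum_map, pow_zero, Matrix.one_mulVec]
    have h1 : (jac r (M + 1)).mulVec (fun i : Fin (M + 1) => vv r f k i) =
        ∑ ij ∈ Finset.HasAntidiagonal.antidiagonal k,
          ph f ij.1 • ((jac r (M + 1)) ^ (ij.2 + 1)).mulVec (Pi.single 0 1) := by
      rw [ih (by omega), Matrix.mulVec_sum]
      refine Finset.sum_congr rfl fun ij _ => ?_
      rw [Matrix.mulVec_smul, Matrix.mulVec_mulVec, pow_succ']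
    simp only [Function.Embedding.prodMap, Function.Embedding.coeFn_mk, Prod.map,
      Function.Embedding.refl_apply, Nat.succ_eq_add_one]
    rw [← h1]
    ext i
    rw [Pi.add_apply, jac_mulVec r (M + 1) (fun n => vv r f k n)
      (vv_neg r f _ _ (by intro l; omega)), vv_rec r f hf0 hf]
    simp only [Pi.smul_apply, Pi.single_apply, smul_eq_mul, Fin.ext_iff, Fin.val_zero]
    ring

lemma finite_wall (g : ℕ → ℝ) (hg0 : ∀ n, 0 ≤ g n) (hg1 : ∀ n, g n ≤ 1) (f : ℕ → ℕ → ℝ)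
    (hf0 : ∀ n, f n 0 = 1)
    (hf : ∀ n k, f (n + 1) (k + 1) = f n (k + 1) + ((1 - g n) * g (n + 1)) * f (n + 2) k) (N : ℕ) :
    ∃ μ : ProbabilityMeasure (Set.Icc (0 : ℝ) 1), ∀ k ≤ N,
      f 1 k = ∑ ij ∈ Finset.HasAntidiagonal.antidiagonal k,
        f 0 ij.1 * ∫ t, (t : ℝ) ^ ij.2 ∂(μ : Measure (Set.Icc (0 : ℝ) 1)) := by
  let r : ℕ → ℝ := fun n => √((1 - g n) * g (n + 1))
  have hr : ∀ n, r n ^ 2 = (1 - g n) * g (n + 1) := fun n =>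
    Real.sq_sqrt (mul_nonneg (by linarith [hg1 n]) (hg0 _))
  obtain ⟨μ, hμ⟩ := jac_measure g r hg0 hg1 (fun _ => rfl) (2 * N + 1) 0
  refine ⟨μ, fun k hk => ?_⟩
  have h := congrFun (vv_sum r f hf0 (fun n k => by rw [hr, hf]) (2 * N) (2 * k) (by omega)) 0
  have h0 := vv_pos r f 0 k
  simp only [zero_add, Finset.range_zero, Finset.prod_empty, one_mul] at h0
  simp only [Fin.val_zero, h0] at h
  rw [h, Finset.sum_apply]
  symm
  refine Finset.sum_of_injOn (fun ij => (2 * ij.1, 2 * ij.2)) ?_ ?_ ?_ ?_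
  · rintro ⟨a, b⟩ _ ⟨c, d⟩ _ h
    simp at h
    ext <;> simp <;> omega
  · rintro ⟨a, b⟩ h
    simp at h ⊢
    omega
  · rintro ⟨a, b⟩ h hn
    simp only [Finset.HasAntidiagonal.mem_antidiagonal] at h
    have : ¬ Even a := by
      rintro ⟨m, hm⟩
      apply hn
      refine ⟨(m, k - m), ?_, ?_⟩
      · simp; omega
      · simp; omega
    simp [ph, this]
  · rintro ⟨a, b⟩ _
    rw [hμ]
    simp [ph]

lemma wall (g : ℕ → ℝ) (hg0 : ∀ n, 0 ≤ g n) (hg1 : ∀ n, g n ≤ 1) (f : ℕ → ℕ → ℝ)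
    (hf0 : ∀ n, f n 0 = 1)
    (hf : ∀ n k, f (n + 1) (k + 1) = f n (k + 1) + ((1 - g n) * g (n + 1)) * f (n + 2) k) :
    ∃ μ : ProbabilityMeasure (Set.Icc (0 : ℝ) 1), ∀ k,
      f 1 k = ∑ ij ∈ Finset.HasAntidiagonal.antidiagonal k,
        f 0 ij.1 * ∫ t, (t : ℝ) ^ ij.2 ∂(μ : Measure (Set.Icc (0 : ℝ) 1)) := by
  let S : ℕ → Set (ProbabilityMeasure (Set.Icc (0 : ℝ) 1)) := fun N => {μ | ∀ k ≤ N,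
      f 1 k = ∑ ij ∈ Finset.HasAntidiagonal.antidiagonal k,
        f 0 ij.1 * ∫ t, (t : ℝ) ^ ij.2 ∂(μ : Measure (Set.Icc (0 : ℝ) 1))}
  have hcont : ∀ j : ℕ, Continuous fun μ : ProbabilityMeasure (Set.Icc (0 : ℝ) 1) =>
      ∫ t, (t : ℝ) ^ j ∂(μ : Measure (Set.Icc (0 : ℝ) 1)) := by
    intro j
    let φ : BoundedContinuousFunction (Set.Icc (0 : ℝ) 1) ℝ :=
      BoundedContinuousFunction.mkOfCompact ⟨fun t => (t : ℝ) ^ j, by fun_prop⟩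
    rw [continuous_iff_continuousAt]
    intro μ
    exact ProbabilityMeasure.tendsto_iff_forall_integral_tendsto.1 tendsto_id φ
  have hcl : ∀ N, IsClosed (S N) := by
    intro N
    simp only [S, Set.ofPred_forall]
    refine isClosed_iInter fun k => isClosed_iInter fun _ => ?_
    refine isClosed_eq continuous_const ?_
    exact continuous_finsetSum _ fun ij _ => continuous_const.mul (hcont _)
  obtain ⟨μ, hμ⟩ := IsCompact.nonempty_iInter_of_sequence_nonempty_isCompact_isClosed S
    (fun N μ h k hk => h k (by omega)) (fun N => finite_wall g hg0 hg1 f hf0 hf N)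
    (hcl 0).isCompact hcl
  exact ⟨μ, fun k => Set.mem_iInter.1 hμ k k le_rfl⟩

/-- Taylor coefficients of the hypergeometric function. -/
noncomputable def hco (a b c : ℝ) (n : ℕ) : ℝ :=
  (ascPochhammer ℝ n).eval a * (ascPochhammer ℝ n).eval b /
      ((ascPochhammer ℝ n).eval c * (n.factorial : ℝ))

lemma asc_left (n : ℕ) (x : ℝ) :
    (ascPochhammer ℝ (n + 1)).eval x = x * (ascPochhammer ℝ n).eval (x + 1) := by
  simp [ascPochhammer_succ_left, Polynomial.eval_comp]

lemma hco_rec (A b c : ℝ) (hc : 0 < c) (k : ℕ) :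
    hco (b + 1) A (c + 1) (k + 1) = hco A b c (k + 1) +
      ((1 - b / c) * (A / (c + 1))) * hco (A + 1) (b + 1) (c + 1 + 1) k := by
  have hk : (0 : ℝ) ≤ k := Nat.cast_nonneg k
  have p2 : 0 < (ascPochhammer ℝ k).eval (c + 1 + 1) := ascPochhammer_pos k _ (by linarith)
  have p1 : 0 < (ascPochhammer ℝ k).eval (c + 1) := ascPochhammer_pos k _ (by linarith)
  have hfac : (0 : ℝ) < k.factorial := by exact_mod_cast k.factorial_pos
  have e : (c + 1) * (ascPochhammer ℝ k).eval (c + 1 + 1) =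
      (ascPochhammer ℝ k).eval (c + 1) * (c + 1 + k) := by
    rw [← asc_left, ascPochhammer_succ_eval]
  unfold hco
  rw [asc_left k A, asc_left k b, asc_left k c, asc_left k (c + 1),
    ascPochhammer_succ_eval k (b + 1), Nat.factorial_succ]
  have e' : (ascPochhammer ℝ k).eval (c + 1 + 1) =
      (ascPochhammer ℝ k).eval (c + 1) * (c + 1 + k) / (c + 1) := by
    rw [← e]; field_simp
  rw [e']
  push_cast
  have : c + 1 + k ≠ 0 := by positivity
  field_simp
  ring

lemma hco_zero (a b c : ℝ) : hco a b c 0 = 1 := by simp [hco]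

lemma hco_symm (a b c : ℝ) (n : ℕ) : hco a b c n = hco b a c n := by
  simp only [hco]; ring

lemma asc_mono (n : ℕ) (x y : ℝ) (hx : 0 ≤ x) (hxy : x ≤ y) :
    0 ≤ (ascPochhammer ℝ n).eval x ∧ (ascPochhammer ℝ n).eval x ≤ (ascPochhammer ℝ n).eval y := by
  induction n with
  | zero => simp
  | succ n ih =>
    rw [ascPochhammer_succ_eval, ascPochhammer_succ_eval]
    have hn : (0 : ℝ) ≤ n := Nat.cast_nonneg n
    exact ⟨mul_nonneg ih.1 (by linarith),
      mul_le_mul ih.2 (by linarith) (by linarith) (ih.1.trans ih.2)⟩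

lemma hco_summable (A b c : ℝ) (hA : 0 ≤ A) (hb : 0 ≤ b) (hbc : b ≤ c) (hc : 0 < c) (z : ℂ)
    (hz : ‖z‖ < 1) : Summable fun n => ‖((hco A b c n : ℝ) : ℂ) * z ^ n‖ := by
  obtain ⟨K, hK⟩ := exists_nat_ge A
  have h := summable_choose_mul_geometric_of_norm_lt_one (R := ℝ) K (r := ‖z‖) (by simpa using hz)
  refine h.of_nonneg_of_le (fun n => norm_nonneg _) fun n => ?_
  rw [norm_mul, norm_pow, Complex.norm_real]
  refine mul_le_mul_of_nonneg_right ?_ (by positivity)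
  have hp : 0 < (ascPochhammer ℝ n).eval c := ascPochhammer_pos n _ hc
  have hfac : (0 : ℝ) < n.factorial := by exact_mod_cast n.factorial_pos
  have h1 := asc_mono n b c hb hbc
  have h2 := asc_mono n A ((K + 1 : ℕ) : ℝ) hA (by push_cast; linarith)
  have h3 : (ascPochhammer ℝ n).eval ((K + 1 : ℕ) : ℝ) = n.factorial * ((n + K).choose K : ℝ) := by
    rw [← ascPochhammer_eval_cast, ascPochhammer_nat_eq_ascFactorial,
      Nat.ascFactorial_eq_factorial_mul_choose, add_comm K n, Nat.choose_symm_add]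
    push_cast
    rfl
  rw [hco, Real.norm_of_nonneg (div_nonneg (mul_nonneg h2.1 h1.1) (by positivity)),
    div_le_iff₀ (by positivity)]
  calc _ ≤ (n.factorial * ((n + K).choose K : ℝ)) * (ascPochhammer ℝ n).eval c :=
        mul_le_mul (h3 ▸ h2.2) h1.2 h1.1 (by positivity)
    _ = _ := by ring

/-- Parameter shift. -/
def stp (p : ℝ × ℝ × ℝ) : ℝ × ℝ × ℝ := (p.2.1 + 1, p.1, p.2.2 + 1)

/-- Shifted parameters. -/
def prm (p : ℝ × ℝ × ℝ) : ℕ → ℝ × ℝ × ℝ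
  | 0 => p
  | n + 1 => stp (prm p n)

lemma prm_inv (p : ℝ × ℝ × ℝ) (h : 0 ≤ p.1 ∧ p.1 ≤ p.2.2 + 1 ∧ 0 ≤ p.2.1 ∧ p.2.1 ≤ p.2.2 ∧ 0 < p.2.2)
    (n : ℕ) : 0 ≤ (prm p n).1 ∧ (prm p n).1 ≤ (prm p n).2.2 + 1 ∧ 0 ≤ (prm p n).2.1 ∧
      (prm p n).2.1 ≤ (prm p n).2.2 ∧ 0 < (prm p n).2.2 := by
  induction n with
  | zero => exact h
  | succ n ih =>
    obtain ⟨h1, h2, h3, h4, h5⟩ := ih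
    simp only [prm, stp]
    refine ⟨?_, ?_, ?_, ?_, ?_⟩ <;> linarith

lemma integral_geom (μ : Measure (Set.Icc (0 : ℝ) 1)) [IsProbabilityMeasure μ] (z : ℂ) (hz : ‖z‖ < 1) :
    HasSum (fun n : ℕ => ((∫ t, (t : ℝ) ^ n ∂μ : ℝ) : ℂ) * z ^ n)
      (∫ t, (1 - ((t : ℝ) : ℂ) * z)⁻¹ ∂μ) := by
  have hb : ∀ t : Set.Icc (0 : ℝ) 1, ‖((t : ℝ) : ℂ) * z‖ ≤ ‖z‖ := by
    intro t
    rw [norm_mul, Complex.norm_real, Real.norm_of_nonneg t.2.1]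
    exact mul_le_of_le_one_left (norm_nonneg _) t.2.2
  have h := hasSum_integral_of_dominated_convergence (μ := μ)
    (F := fun (n : ℕ) (t : Set.Icc (0 : ℝ) 1) => (((t : ℝ) : ℂ) * z) ^ n)
    (f := fun t => (1 - ((t : ℝ) : ℂ) * z)⁻¹)
    (fun n _ => ‖z‖ ^ n) (fun n => (by fun_prop : Continuous _).aestronglyMeasurable)
    (fun n => Eventually.of_forall fun t => by
      rw [norm_pow]; exact pow_le_pow_left₀ (norm_nonneg _) (hb t) n)
    (Eventually.of_forall fun t => summable_geometric_of_lt_one (norm_nonneg _) hz)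
    (integrable_const _)
    (Eventually.of_forall fun t => hasSum_geometric_of_norm_lt_one ((hb t).trans_lt hz))
  convert! h using 2 with n
  simp only [mul_pow]
  rw [integral_mul_const]
  congr 1
  rw [← integral_complex_ofReal]
  simp

theorem stmt_9 (a b c : ℝ) (ha : -1 ≤ a) (hac : a ≤ c) (hb : 0 ≤ b) (hbc : b ≤ c)
    (hc : c ≠ 0) :
    ∃ μ : Measure ℝ, IsProbabilityMeasure μ ∧ μ (Set.Icc (0 : ℝ) 1)ᶜ = 0 ∧
      ∀ z ∈ Metric.ball (0 : ℂ) 1,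
        hyperF (a + 1) (b + 1) (c + 1) z =
          hyperF (a + 1) b c z * ∫ t : ℝ, (1 - (t : ℂ) * z)⁻¹ ∂μ := by
  have hc0 : 0 < c := lt_of_le_of_ne (hb.trans hbc) (Ne.symm hc)
  let p : ℝ × ℝ × ℝ := (a + 1, b, c)
  have hp := prm_inv p ⟨by simp only [p]; linarith, by simp only [p]; linarith, hb, hbc, hc0⟩
  obtain ⟨ν, hν⟩ := wall (fun n => (prm p n).2.1 / (prm p n).2.2)
    (fun n => div_nonneg (hp n).2.2.1 (hp n).2.2.2.2.le)
    (fun n => div_le_one_of_le₀ (hp n).2.2.2.1 (hp n).2.2.2.2.le)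
    (fun n => hco (prm p n).1 (prm p n).2.1 (prm p n).2.2)
    (fun n => hco_zero _ _ _)
    (fun n k => hco_rec (prm p n).1 (prm p n).2.1 (prm p n).2.2 (hp n).2.2.2.2 k)
  have hemb : MeasurableEmbedding (Subtype.val : Set.Icc (0 : ℝ) 1 → ℝ) :=
    MeasurableEmbedding.subtype_coe measurableSet_Icc
  refine ⟨(ν : Measure (Set.Icc (0 : ℝ) 1)).map Subtype.val,
    Measure.isProbabilityMeasure_map hemb.measurable.aemeasurable, ?_, ?_⟩
  · rw [hemb.map_apply]
    have : (Subtype.val : Set.Icc (0 : ℝ) 1 → ℝ) ⁻¹' (Set.Icc (0 : ℝ) 1)ᶜ = ∅ := by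
      ext x
      simpa using x.2
    rw [this, measure_empty]
  · intro z hz
    have hz1 : ‖z‖ < 1 := by simpa using hz
    rw [hemb.integral_map]
    have hg := integral_geom (ν : Measure (Set.Icc (0 : ℝ) 1)) z hz1
    have hs := hco_summable (a + 1) b c (by linarith) hb hbc hc0 z hz1
    rw [← hg.tsum_eq]
    change ∑' n, ((hco (a + 1) (b + 1) (c + 1) n : ℝ) : ℂ) * z ^ n =
      (∑' n, ((hco (a + 1) b c n : ℝ) : ℂ) * z ^ n) * _
    rw [tsum_mul_tsum_eq_tsum_sum_antidiagonal_of_summable_norm hs hg.summable.norm]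
    refine tsum_congr fun k => ?_
    have h := hν k
    simp only [prm, stp, p] at h
    rw [hco_symm, h]
    push_cast
    rw [Finset.sum_mul]
    refine Finset.sum_congr rfl fun ij hij => ?_
    rw [Finset.HasAntidiagonal.mem_antidiagonal] at hij
    rw [← hij, pow_add]
    ring
end

section
/- Let a, b, c be real constants with −1 ≤ a ≤ c, 0 ≤ b ≤ c and c ≠ 0. Then the radial limit L = lim_{x→1⁻} F(a+1,b;c;−x)/F(a,b;c;−x) exists and satisfies c/(b+c) ≤ L ≤ (2c − b)/(2c). -/
open Complex Filter MeasureTheory Metric Set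
/-- Real-valued Gaussian hypergeometric function for real arguments in (-1,1). -/
noncomputable def hyperFR (a b c x : ℝ) : ℝ :=
  ∑' n : ℕ, ((ascPochhammer ℝ n).eval a * (ascPochhammer ℝ n).eval b /
      ((ascPochhammer ℝ n).eval c * (n.factorial : ℝ))) * x ^ n


lemma hasSum_of_eq {f g : ℕ → ℝ} {s : ℝ} (h : HasSum g s) (e : ∀ n, f n = g n) : HasSum f s := by
  rwa [funext e]

/-- Binomial series in Pochhammer form. -/
lemma binom_hasSum (a y : ℝ) (hy : |y| < 1) :
    HasSum (fun n : ℕ => (ascPochhammer ℝ n).eval a / (n.factorial : ℝ) * (-y) ^ n)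
      ((1 + y) ^ (-a)) := by
  have h := (Real.one_div_one_sub_rpow_hasFPowerSeriesOnBall_zero a).hasSum (y := -y)
    (by simpa [Metric.mem_eball, edist_dist, Real.dist_eq] using hy)
  have h1 : 0 ≤ 1 + y := by linarith [(abs_lt.1 hy).1]
  have e : (1 + y) ^ (-a) = 1 / (1 - (0 + -y)) ^ a := by
    rw [Real.rpow_neg h1]; simp
  rw [e]
  refine hasSum_of_eq h fun n => ?_
  have h2 := Ring.factorial_nsmul_multichoose_eq_ascPochhammer a n
  rw [Polynomial.ascPochhammer_smeval_eq_eval, Ring.multichoose_eq, nsmul_eq_mul] at h2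
  rw [← h2]
  have : (n.factorial : ℝ) ≠ 0 := by positivity
  simp [FormalMultilinearSeries.ofScalars]
  field_simp
  simp

lemma gamma_add_nat (b : ℝ) (hb : 0 < b) (n : ℕ) :
    Real.Gamma (b + n) = (ascPochhammer ℝ n).eval b * Real.Gamma b := by
  induction n with
  | zero => simp
  | succ n ih =>
    have : b + n ≠ 0 := by positivity
    push_cast
    rw [← add_assoc, Real.Gamma_add_one this, ih, ascPochhammer_succ_eval]
    ring

/-- A probability measure on the unit interval with moments `(b)_n / (c)_n`. -/
lemma exists_measure (b c : ℝ) (hb : 0 ≤ b) (hbc : b ≤ c) (hc : 0 < c) :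
    ∃ μ : Measure ℝ, IsProbabilityMeasure μ ∧ (∀ᵐ t ∂μ, t ∈ Icc (0 : ℝ) 1) ∧
      ∀ n : ℕ, ∫ t, t ^ n ∂μ = (ascPochhammer ℝ n).eval b / (ascPochhammer ℝ n).eval c := by
  rcases hb.eq_or_lt with rfl | hb
  · refine ⟨Measure.dirac 0, inferInstance, ?_, ?_⟩
    · rw [ae_dirac_iff (p := fun t : ℝ => t ∈ Icc (0 : ℝ) 1) measurableSet_Icc]; simp
    · intro n
      rcases Nat.eq_zero_or_pos n with rfl | hn
      · simp
      · simp [ascPochhammer_eval_zero, hn.ne']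
  rcases hbc.eq_or_lt with rfl | hbc
  · refine ⟨Measure.dirac 1, inferInstance, ?_, ?_⟩
    · rw [ae_dirac_iff (p := fun t : ℝ => t ∈ Icc (0 : ℝ) 1) measurableSet_Icc]; simp
    · intro n
      have := (ascPochhammer_pos n b hb).ne'
      simp [this]
  have hd : 0 < c - b := by linarith
  have key : ∀ b' : ℝ, 0 < b' → ∫ t, ProbabilityTheory.betaPDFReal b' (c - b) t = 1 := by
    intro b' hb'
    rw [integral_eq_lintegral_of_nonneg_ae]
    · have := ProbabilityTheory.lintegral_betaPDF_eq_one hb' hd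
      simp only [ProbabilityTheory.betaPDF] at this
      rw [this]; simp
    · refine ae_of_all _ fun t => ?_
      by_cases h : 0 < t ∧ t < 1
      · exact (ProbabilityTheory.betaPDFReal_pos h.1 h.2 hb' hd).le
      · simp [ProbabilityTheory.betaPDFReal, h]
    · exact (ProbabilityTheory.measurable_betaPDFReal _ _).aestronglyMeasurable
  have hnn : ∀ t, 0 ≤ ProbabilityTheory.betaPDFReal b (c - b) t := by
    intro t
    by_cases h : 0 < t ∧ t < 1
    · exact (ProbabilityTheory.betaPDFReal_pos h.1 h.2 hb hd).le
    · simp [ProbabilityTheory.betaPDFReal, h]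
  have hmeas : Measurable (ProbabilityTheory.betaPDF b (c - b)) :=
    (ProbabilityTheory.measurable_betaPDFReal _ _).ennreal_ofReal
  refine ⟨ProbabilityTheory.betaMeasure b (c - b),
    ProbabilityTheory.isProbabilityMeasureBeta hb hd, ?_, ?_⟩
  · unfold ProbabilityTheory.betaMeasure
    rw [ae_withDensity_iff hmeas]
    refine ae_of_all _ fun t ht => ?_
    by_contra hcon
    apply ht
    have : ¬ (0 < t ∧ t < 1) := fun h => hcon ⟨h.1.le, h.2.le⟩
    simp [ProbabilityTheory.betaPDF_eq, this]
  · intro n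
    unfold ProbabilityTheory.betaMeasure
    rw [integral_withDensity_eq_integral_toReal_smul hmeas
      (ae_of_all _ fun t => by simp [ProbabilityTheory.betaPDF])]
    have hbn : 0 < b + n := by positivity
    have e : ∀ t, (ProbabilityTheory.betaPDF b (c - b) t).toReal • t ^ n =
        ProbabilityTheory.beta (b + n) (c - b) / ProbabilityTheory.beta b (c - b) *
          ProbabilityTheory.betaPDFReal (b + n) (c - b) t := by
      intro t
      rw [ProbabilityTheory.betaPDF, ENNReal.toReal_ofReal (hnn t)]
      unfold ProbabilityTheory.betaPDFReal
      have p1 := (ProbabilityTheory.beta_pos hb hd).ne'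
      have p2 := (ProbabilityTheory.beta_pos hbn hd).ne'
      split_ifs with h
      · rw [show b + n - 1 = (b - 1) + n by ring, Real.rpow_add h.1, Real.rpow_natCast,
          smul_eq_mul]
        field_simp
      · simp
    simp_rw [e]
    rw [integral_const_mul, key _ hbn]
    unfold ProbabilityTheory.beta
    rw [show b + n + (c - b) = c + n by ring, show b + (c - b) = c by ring,
      gamma_add_nat b hb, gamma_add_nat c hc]
    have g1 := (Real.Gamma_pos_of_pos hb).ne'
    have g2 := (Real.Gamma_pos_of_pos hc).ne'
    have g3 := (Real.Gamma_pos_of_pos hd).ne'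
    have g4 := (ascPochhammer_pos n c hc).ne'
    field_simp

section
variable {μ : Measure ℝ} [IsProbabilityMeasure μ]

lemma pow_bound (p x t : ℝ) (hx : x ∈ Icc (0 : ℝ) 1) (ht : t ∈ Icc (0 : ℝ) 1) :
    ‖(1 + x * t) ^ p‖ ≤ 2 ^ |p| := by
  have h0 : 0 ≤ x * t := mul_nonneg hx.1 ht.1
  have h1 : x * t ≤ 1 := mul_le_one₀ hx.2 ht.1 ht.2
  rw [Real.norm_of_nonneg (by positivity)]
  calc (1 + x * t) ^ p ≤ (1 + x * t) ^ |p| :=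
        Real.rpow_le_rpow_of_exponent_le (by linarith) (le_abs_self p)
    _ ≤ 2 ^ |p| := Real.rpow_le_rpow (by linarith) (by linarith) (abs_nonneg p)

lemma pow_integrable (hμ : ∀ᵐ t ∂μ, t ∈ Icc (0 : ℝ) 1) (p x : ℝ) (hx : x ∈ Icc (0 : ℝ) 1) :
    Integrable (fun t => (1 + x * t) ^ p) μ := by
  refine Integrable.of_bound (C := 2 ^ |p|) ?_ ?_
  · exact (by fun_prop : Measurable fun t : ℝ => (1 + x * t) ^ p).aestronglyMeasurable
  · filter_upwards [hμ] with t ht using pow_bound p x t hx ht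

lemma pow_integral_pos (hμ : ∀ᵐ t ∂μ, t ∈ Icc (0 : ℝ) 1) (p x : ℝ) (hx : x ∈ Icc (0 : ℝ) 1) :
    0 < ∫ t, (1 + x * t) ^ p ∂μ := by
  have hle : ∫ t, (2 : ℝ) ^ (-|p|) ∂μ ≤ ∫ t, (1 + x * t) ^ p ∂μ := by
    refine integral_mono_ae (integrable_const _) (pow_integrable hμ p x hx) ?_
    filter_upwards [hμ] with t ht
    have h0 : 0 ≤ x * t := mul_nonneg hx.1 ht.1
    have h1 := pow_bound (-p) x t hx ht
    rw [Real.norm_of_nonneg (by positivity), abs_neg] at h1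
    rw [Real.rpow_neg (by positivity)] at h1 ⊢
    exact inv_le_of_inv_le₀ (by positivity) h1
  refine lt_of_lt_of_le ?_ hle
  simp only [integral_const, probReal_univ, smul_eq_mul, one_mul]
  positivity

lemma pow_tendsto (hμ : ∀ᵐ t ∂μ, t ∈ Icc (0 : ℝ) 1) (p : ℝ) :
    Tendsto (fun x : ℝ => ∫ t, (1 + x * t) ^ p ∂μ) (nhdsWithin 1 (Set.Iio 1))
      (nhds (∫ t, (1 + 1 * t) ^ p ∂μ)) := by
  refine tendsto_integral_filter_of_dominated_convergence (fun _ => 2 ^ |p|) ?_ ?_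
    (integrable_const _) ?_
  · exact Eventually.of_forall fun x =>
      (by fun_prop : Measurable fun t : ℝ => (1 + x * t) ^ p).aestronglyMeasurable
  · have : Ioo (0 : ℝ) 1 ∈ nhdsWithin (1 : ℝ) (Set.Iio 1) := Ioo_mem_nhdsLT (by norm_num)
    filter_upwards [this] with x hx
    filter_upwards [hμ] with t ht using pow_bound p x t ⟨hx.1.le, hx.2.le⟩ ht
  · filter_upwards [hμ] with t ht
    have hc : ContinuousAt (fun x : ℝ => (1 + x * t) ^ p) 1 := by
      refine ContinuousAt.rpow_const (by fun_prop) (Or.inl ?_)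
      have := ht.1
      positivity
    exact hc.tendsto.mono_left nhdsWithin_le_nhds

/-- Euler-type integral representation. -/
lemma hyper_eq (b c : ℝ) (hμ : ∀ᵐ t ∂μ, t ∈ Icc (0 : ℝ) 1)
    (hm : ∀ n : ℕ, ∫ t, t ^ n ∂μ = (ascPochhammer ℝ n).eval b / (ascPochhammer ℝ n).eval c)
    (a x : ℝ) (hx0 : 0 ≤ x) (hx1 : x < 1) :
    hyperFR a b c (-x) = ∫ t, (1 + x * t) ^ (-a) ∂μ := by
  have hxa : |x| < 1 := by rw [abs_of_nonneg hx0]; exact hx1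
  have hint : ∀ n : ℕ, Integrable (fun t : ℝ =>
      (ascPochhammer ℝ n).eval a / (n.factorial : ℝ) * (-(x * t)) ^ n) μ := by
    intro n
    refine Integrable.of_bound
      (C := ‖(ascPochhammer ℝ n).eval a / (n.factorial : ℝ) * (-x) ^ n‖) ?_ ?_
    · exact Measurable.aestronglyMeasurable (by fun_prop)
    · filter_upwards [hμ] with t ht
      rw [show -(x * t) = -x * t by ring, mul_pow, ← mul_assoc, norm_mul _ (t ^ n)]
      refine mul_le_of_le_one_right (norm_nonneg _) ?_
      rw [Real.norm_of_nonneg (pow_nonneg ht.1 n)]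
      exact pow_le_one₀ ht.1 ht.2
  have hs := hasSum_integral_of_summable_integral_norm hint ?_
  · rw [hyperFR]
    have h2 : (∫ t, ∑' n : ℕ, (ascPochhammer ℝ n).eval a / (n.factorial : ℝ) * (-(x * t)) ^ n ∂μ)
        = ∫ t, (1 + x * t) ^ (-a) ∂μ := by
      refine integral_congr_ae ?_
      filter_upwards [hμ] with t ht
      refine (binom_hasSum a (x * t) ?_).tsum_eq
      rw [abs_of_nonneg (mul_nonneg hx0 ht.1)]
      calc x * t ≤ x := mul_le_of_le_one_right hx0 ht.2
        _ < 1 := hx1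
    rw [← h2, ← hs.tsum_eq]
    refine tsum_congr fun n => ?_
    simp_rw [show ∀ t : ℝ, -(x * t) = -x * t by intro t; ring, mul_pow, ← mul_assoc]
    rw [integral_const_mul, hm]
    ring
  · refine Summable.of_nonneg_of_le (fun n => integral_nonneg fun t => norm_nonneg _) ?_
      (binom_hasSum a x hxa).summable.norm
    intro n
    calc _ ≤ ∫ t, ‖(ascPochhammer ℝ n).eval a / (n.factorial : ℝ) * (-x) ^ n‖ ∂μ := by
          refine integral_mono_ae (hint n).norm (integrable_const _) ?_
          filter_upwards [hμ] with t ht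
          rw [show -(x * t) = -x * t by ring, mul_pow, ← mul_assoc, norm_mul _ (t ^ n)]
          refine mul_le_of_le_one_right (norm_nonneg _) ?_
          rw [Real.norm_of_nonneg (pow_nonneg ht.1 n)]
          exact pow_le_one₀ ht.1 ht.2
      _ = _ := by simp

/-- Monotonicity of the ratio in `a` (Chebyshev's inequality). -/
lemma ratio_mono (hμ : ∀ᵐ t ∂μ, t ∈ Icc (0 : ℝ) 1) (a a' x : ℝ) (haa : a ≤ a')
    (hx : x ∈ Icc (0 : ℝ) 1) :
    (∫ t, (1 + x * t) ^ (-(a + 1)) ∂μ) / (∫ t, (1 + x * t) ^ (-a) ∂μ) ≤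
    (∫ t, (1 + x * t) ^ (-(a' + 1)) ∂μ) / (∫ t, (1 + x * t) ^ (-a') ∂μ) := by
  have P := pow_integral_pos hμ (-a) x hx
  have P1 := pow_integral_pos hμ (-(a + 1)) x hx
  have P' := pow_integral_pos hμ (-a') x hx
  set L := (∫ t, (1 + x * t) ^ (-(a + 1)) ∂μ) / (∫ t, (1 + x * t) ^ (-a) ∂μ) with hL
  have hLpos : 0 < L := div_pos P1 P
  have hLe : (∫ t, (1 + x * t) ^ (-(a + 1)) ∂μ) = L * ∫ t, (1 + x * t) ^ (-a) ∂μ := by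
    rw [hL]; field_simp
  rw [le_div_iff₀ P']
  have i1 := pow_integrable hμ (-a) x hx
  have i2 := pow_integrable hμ (-(a + 1)) x hx
  have i3 := pow_integrable hμ (-a') x hx
  have i4 := pow_integrable hμ (-(a' + 1)) x hx
  have hnn : 0 ≤ ∫ t, (((1 + x * t) ^ (-(a' + 1)) - L * (1 + x * t) ^ (-a')) -
      L ^ (a' - a) * ((1 + x * t) ^ (-(a + 1)) - L * (1 + x * t) ^ (-a))) ∂μ := by
    refine integral_nonneg_of_ae ?_
    filter_upwards [hμ] with t ht
    have h0 : 0 ≤ x * t := mul_nonneg hx.1 ht.1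
    have hp : 0 < 1 + x * t := by linarith
    set u := (1 + x * t)⁻¹ with hu
    have hup : 0 < u := inv_pos.2 hp
    have e : ∀ p : ℝ, (1 + x * t) ^ (-p) = u ^ p := by
      intro p
      rw [hu, Real.rpow_neg hp.le, Real.inv_rpow hp.le]
    simp only [e, Pi.zero_apply]
    rw [Real.rpow_add hup, Real.rpow_add hup, Real.rpow_one,
      show u ^ a' = u ^ a * u ^ (a' - a) by rw [← Real.rpow_add hup]; ring_nf]
    have hmain : 0 ≤ (u - L) * (u ^ (a' - a) - L ^ (a' - a)) := by
      rcases le_total u L with h | h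
      · exact mul_nonneg_of_nonpos_of_nonpos (by linarith)
          (by linarith [Real.rpow_le_rpow hup.le h (sub_nonneg.2 haa)])
      · exact mul_nonneg (by linarith)
          (by linarith [Real.rpow_le_rpow hLpos.le h (sub_nonneg.2 haa)])
    have := mul_nonneg (Real.rpow_nonneg hup.le a) hmain
    linarith
  have j1 : Integrable (fun t => (1 + x * t) ^ (-(a' + 1)) - L * (1 + x * t) ^ (-a')) μ :=
    i4.sub (i3.const_mul _)
  have j2 : Integrable (fun t => (1 + x * t) ^ (-(a + 1)) - L * (1 + x * t) ^ (-a)) μ :=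
    i2.sub (i1.const_mul _)
  rw [integral_sub j1 (j2.const_mul _), integral_sub i4 (i3.const_mul _), integral_const_mul, integral_const_mul,
    integral_sub i2 (i1.const_mul _), integral_const_mul, hLe] at hnn
  linarith
end

lemma hyper_c (b c x : ℝ) (hc : 0 < c) (hx0 : 0 ≤ x) (hx1 : x < 1) :
    hyperFR c b c (-x) = (1 + x) ^ (-b) := by
  rw [← (binom_hasSum b x (by rwa [abs_of_nonneg hx0])).tsum_eq, hyperFR]
  refine tsum_congr fun n => ?_
  have g4 := (ascPochhammer_pos n c hc).ne'
  field_simp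

lemma poch_shift (c : ℝ) (n : ℕ) :
    c * (ascPochhammer ℝ n).eval (c + 1) = (ascPochhammer ℝ n).eval c * (c + n) := by
  rw [← ascPochhammer_succ_eval, ascPochhammer_succ_left]
  simp

lemma hyper_c1 (b c x : ℝ) (hc : 0 < c) (hx0 : 0 ≤ x) (hx1 : x < 1) :
    hyperFR (c + 1) b c (-x) = (1 + x) ^ (-b) * (1 - b * x / (c * (1 + x))) := by
  have hxa : |x| < 1 := by rwa [abs_of_nonneg hx0]
  have h1 := binom_hasSum b x hxa
  have h2 := (binom_hasSum (b + 1) x hxa).mul_left (b * (-x) / c)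
  have h3 : HasSum (fun n : ℕ => (n : ℝ) / c * ((ascPochhammer ℝ n).eval b / (n.factorial : ℝ)
      * (-x) ^ n)) (b * (-x) / c * (1 + x) ^ (-(b + 1))) := by
    rw [← hasSum_nat_add_iff' 1]
    simp only [Finset.range_one, Finset.sum_singleton, Nat.cast_zero, zero_div, zero_mul, sub_zero]
    refine hasSum_of_eq h2 fun n => ?_
    rw [ascPochhammer_succ_eval, ← poch_shift, Nat.factorial_succ]
    push_cast
    have : (n.factorial : ℝ) ≠ 0 := by positivity
    have : (n : ℝ) + 1 ≠ 0 := by positivity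
    field_simp
    ring
  have h4 := h1.add h3
  have e : (1 + x) ^ (-b) * (1 - b * x / (c * (1 + x))) =
      (1 + x) ^ (-b) + b * (-x) / c * (1 + x) ^ (-(b + 1)) := by
    have hp : 0 < 1 + x := by linarith
    rw [show -(b + 1) = -b - 1 by ring, Real.rpow_sub_one hp.ne']
    field_simp
    ring
  rw [e, ← h4.tsum_eq, hyperFR]
  refine tsum_congr fun n => ?_
  have g4 := (ascPochhammer_pos n c hc).ne'
  have : (n.factorial : ℝ) ≠ 0 := by positivity
  have e2 : (ascPochhammer ℝ n).eval (c + 1) = (ascPochhammer ℝ n).eval c * (c + n) / c := by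
    rw [← poch_shift]; field_simp
  rw [e2]
  field_simp

theorem stmt_10 (a b c : ℝ) (ha : -1 ≤ a) (hac : a ≤ c) (hb : 0 ≤ b) (hbc : b ≤ c)
    (hc : c ≠ 0) :
    ∃ L : ℝ,
      Tendsto (fun x : ℝ => hyperFR (a + 1) b c (-x) / hyperFR a b c (-x))
        (nhdsWithin 1 (Set.Iio 1)) (nhds L) ∧
      c / (b + c) ≤ L ∧ L ≤ (2 * c - b) / (2 * c) := by
  have hc0 : 0 < c := lt_of_le_of_ne (hb.trans hbc) hc.symm
  obtain ⟨μ, hP, hμ, hm⟩ := exists_measure b c hb hbc hc0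
  have hmem : Ioo (0 : ℝ) 1 ∈ nhdsWithin (1 : ℝ) (Set.Iio 1) := Ioo_mem_nhdsLT (by norm_num)
  have one_mem : (1 : ℝ) ∈ Icc (0 : ℝ) 1 := by simp
  have hT := (pow_tendsto hμ (-(a + 1))).div (pow_tendsto hμ (-a))
    (pow_integral_pos hμ (-a) 1 one_mem).ne'
  refine ⟨_, hT.congr' ?_, ?_, ?_⟩
  · filter_upwards [hmem] with x hx
    rw [hyper_eq b c hμ hm _ x hx.1.le hx.2, hyper_eq b c hμ hm _ x hx.1.le hx.2]
    rfl
  · refine le_trans (le_of_eq ?_) (ratio_mono hμ (-1) a 1 ha one_mem)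
    have i : Integrable (fun t : ℝ => t) μ := by
      refine Integrable.of_bound (C := 1) (by fun_prop) ?_
      filter_upwards [hμ] with t ht
      rw [Real.norm_of_nonneg ht.1]; exact ht.2
    have m1 : ∫ t, t ∂μ = b / c := by simpa using hm 1
    simp only [neg_add_cancel, neg_zero, Real.rpow_zero, neg_neg, Real.rpow_one, one_mul]
    rw [integral_add (integrable_const _) i, m1]
    simp
    field_simp
    ring
  · have hR : Tendsto (fun x : ℝ => 1 - b * x / (c * (1 + x))) (nhdsWithin 1 (Set.Iio 1))
        (nhds ((2 * c - b) / (2 * c))) := by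
      have : ContinuousAt (fun x : ℝ => 1 - b * x / (c * (1 + x))) 1 := by
        refine ContinuousAt.sub (by fun_prop) (ContinuousAt.div (by fun_prop) (by fun_prop) ?_)
        positivity
      have h := this.tendsto.mono_left (nhdsWithin_le_nhds (s := Set.Iio 1))
      convert h using 2
      field_simp
      ring
    refine le_of_tendsto_of_tendsto hT hR ?_
    filter_upwards [hmem] with x hx
    refine (ratio_mono hμ a c x hac ⟨hx.1.le, hx.2.le⟩).trans (le_of_eq ?_)
    rw [← hyper_eq b c hμ hm _ x hx.1.le hx.2, ← hyper_eq b c hμ hm _ x hx.1.le hx.2,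
      hyper_c b c x hc0 hx.1.le hx.2, hyper_c1 b c x hc0 hx.1.le hx.2]
    have : 0 < (1 + x) ^ (-b) := Real.rpow_pos_of_pos (by linarith [hx.1]) _
    field_simp
end
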